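/- Let (R, m) be an analytically unramified Noetherian local ring with conductor ideal 𝔠, and suppose R satisfies Serre's condition (S2), i.e. depth(R_p) ≥ min{2, height(p)} for every prime ideal p. If Ext^i_R(𝔠, 𝔠) = 0 for some i > 0, then 𝔠 is a free R-module and R is normal. -/

import Mathlib

open CategoryTheory IsLocalRing

set_option synthInstance.maxHeartbeats 1000000
set_option maxHeartbeats 1000000

noncomputable section

/-- The integral closure `R̄` of `R` in its total ring of fractions, viewed as a type
(with its canonical `R`-algebra and `R`-module structures). -/
abbrev IntClosure (R : Type) [CommRing R] : Type :=
  ↥(integralClosure R (FractionRing R))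

/-- The quotient `R`-module `R̄/R`. -/
abbrev IntClosureQuot (R : Type) [CommRing R] : Type :=
  IntClosure R ⧸ LinearMap.range (Algebra.linearMap R (IntClosure R))

/-- The conductor ideal `𝔠 = Ann_R(R̄/R) = {r : R | r • R̄ ⊆ R}`. -/
def conductorIdeal (R : Type) [CommRing R] : Ideal R :=
  Module.annihilator R (IntClosureQuot R)

/-- A local ring `R` is analytically unramified if its `m`-adic completion is reduced. -/
def AnalyticallyUnramified (R : Type) [CommRing R] [IsLocalRing R] : Prop :=
  IsReduced (AdicCompletion (maximalIdeal R) R)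

/-- `R` is normal: it is reduced and equal to its integral closure `R̄` in its total
ring of fractions. -/
def IsNormalRing (R : Type) [CommRing R] : Prop :=
  IsReduced R ∧ integralClosure R (FractionRing R) = ⊥

/-- `Ext^i_R(M, N)` as a type. -/
abbrev ExtMod (R : Type) [CommRing R] (M : Type) [AddCommGroup M] [Module R M]
    (N : Type) [AddCommGroup N] [Module R N] (i : ℕ) : Type :=
  ↥(((Ext R (ModuleCat.{0} R) i).obj (Opposite.op (ModuleCat.of R M))).obj (ModuleCat.of R N))

/-- `M` has finite projective dimension over `R`:
`Ext^i_R(M, -)` vanishes for all `i` bigger than some `n`. -/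
def HasFiniteProjDim (R : Type) [CommRing R] (M : Type) [AddCommGroup M] [Module R M] : Prop :=
  ∃ n : ℕ, ∀ (N : ModuleCat.{0} R) (i : ℕ), n < i →
    Subsingleton ↥(((Ext R (ModuleCat.{0} R) i).obj (Opposite.op (ModuleCat.of R M))).obj N)

/-- `M` has finite injective dimension over `R`:
`Ext^i_R(-, M)` vanishes for all `i` bigger than some `n`. -/
def HasFiniteInjDim (R : Type) [CommRing R] (M : Type) [AddCommGroup M] [Module R M] : Prop :=
  ∃ n : ℕ, ∀ (N : ModuleCat.{0} R) (i : ℕ), n < i →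
    Subsingleton ↥(((Ext R (ModuleCat.{0} R) i).obj (Opposite.op N)).obj (ModuleCat.of R M))

/-- The depth of an `R`-module `M` over a local ring `(R, m)`: the least `i` such that
`Ext^i_R(R/m, M) ≠ 0` (`⊤` if there is no such `i`), valued in `WithBot (WithTop ℕ)`
for easy comparison with `ringKrullDim`. -/
def moduleDepth (R : Type) [CommRing R] [IsLocalRing R]
    (M : Type) [AddCommGroup M] [Module R M] : WithBot (WithTop ℕ) :=
  sInf { n : WithBot (WithTop ℕ) |
    ∃ i : ℕ, n = (i : ℕ) ∧ Nontrivial (ExtMod R (ResidueField R) M i) }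

/-- A Noetherian local ring is Gorenstein if it has finite injective dimension
as a module over itself. -/
def IsGorensteinLocal (R : Type) [CommRing R] [IsLocalRing R] : Prop :=
  IsNoetherianRing R ∧ HasFiniteInjDim R R

/-- A Noetherian local ring is Cohen–Macaulay if its depth equals its Krull dimension. -/
def IsCohenMacaulayLocal (R : Type) [CommRing R] [IsLocalRing R] : Prop :=
  IsNoetherianRing R ∧ moduleDepth R R = ringKrullDim R

/-- A ring is Cohen–Macaulay if it is Noetherian and all its localizations at primes
are Cohen–Macaulay local rings. -/
def IsCohenMacaulayRing (A : Type) [CommRing A] : Prop :=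
  IsNoetherianRing A ∧ ∀ (p : Ideal A) [p.IsPrime],
    moduleDepth (Localization.AtPrime p) (Localization.AtPrime p) =
      ringKrullDim (Localization.AtPrime p)

/-- Serre's condition `(S2)`: `depth (R_p) ≥ min {2, height p}` for every prime `p`
(`height p` being the dimension of `R_p`). -/
def SerreS2 (R : Type) [CommRing R] : Prop :=
  ∀ (p : Ideal R) [p.IsPrime],
    min 2 (ringKrullDim (Localization.AtPrime p)) ≤
      moduleDepth (Localization.AtPrime p) (Localization.AtPrime p)

/-- A Noetherian local ring is regular if its maximal ideal can be generated by
`dim R` elements. -/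
def IsRegularLocal (A : Type) [CommRing A] [IsLocalRing A] : Prop :=
  IsNoetherianRing A ∧ ∃ s : Finset A, Ideal.span (s : Set A) = maximalIdeal A ∧
    (s.card : WithBot (WithTop ℕ)) = ringKrullDim A

/-- Serre's condition `(R1)`: `R_p` is regular for every prime `p` of height at most `1`. -/
def SerreR1 (R : Type) [CommRing R] : Prop :=
  ∀ (p : Ideal R) [p.IsPrime], ringKrullDim (Localization.AtPrime p) ≤ 1 →
    IsRegularLocal (Localization.AtPrime p)

/-- The `i`-th local cohomology `H^i_m(M)` of `M` with support in the maximal ideal,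
as a type. -/
abbrev localCohMod (R : Type) [CommRing R] [IsLocalRing R] (i : ℕ)
    (M : Type) [AddCommGroup M] [Module R M] : Type :=
  ↥((localCohomology (maximalIdeal R) i).obj (ModuleCat.of R M))

/-- `x : Fin d → R` is a system of parameters for the local ring `(R, m)`:
`d = dim R`, all `x i` lie in `m`, and the ideal they generate is `m`-primary
(its radical is `m`). -/
def IsSystemOfParameters (R : Type) [CommRing R] [IsLocalRing R] {d : ℕ}
    (x : Fin d → R) : Prop :=
  (d : WithBot (WithTop ℕ)) = ringKrullDim R ∧ (∀ i, x i ∈ maximalIdeal R) ∧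
    (Ideal.span (Set.range x)).radical = maximalIdeal R

/-- `E` is an injective hull of the residue field of the local ring `R`:
`E` is injective and contains a copy of `R/m` as an essential submodule. -/
def IsInjectiveHullOfResidueField (R : Type) [CommRing R] [IsLocalRing R]
    (E : Type) [AddCommGroup E] [Module R E] : Prop :=
  Module.Injective R E ∧ ∃ f : ResidueField R →ₗ[R] E, Function.Injective f ∧
    ∀ N : Submodule R E, N ≠ ⊥ → N ⊓ LinearMap.range f ≠ ⊥

/-!
If `R ≠ R̄`, choose `s ∈ R̄` such that `p = {r | r s ∈ R}` is prime. The conductor `𝔠` contains a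
nonzerodivisor `a`, and `a ∈ p`. After localizing at `p`, the class of `b = a s` spans a copy of
the residue field in `R / (a)`, so `R` has depth at most one and by (S2) its maximal ideal `m` is
minimal over `a`. Hence the integrally closed ring `R̄` is semilocal of dimension one at `a`, and
its ideals containing `a` are principal; in particular `m R̄ = τ R̄` and `𝔠 = 𝔠 R̄ ≅ R̄`. Thus
`Ext^i_R(𝔠, R̄) = 0`, which forces `𝔠` to be free: the case `i = 1` lifts a basis of the dual of
`𝔠 / m 𝔠` along `R̄ → R̄ / τ R̄`, and since `R` has depth one, higher syzygies can only be free if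
`𝔠` is. Finally `R̄ ≅ 𝔠` is free, and since `a R̄ ⊆ R` this gives `R̄ = R`, a contradiction.

That `R̄` is finite over `R` descends from the completion, where it follows from every complete
Noetherian local ring `A` being a Nagata ring. This is shown by Noetherian induction for domains `C`
finite over `A`. The integral closure `B` of `C` is `x`-adically separated, so it suffices that
`B / x B` is finite over `C` for some `x ≠ 0` in the maximal ideal. Now `B / x B` embeds into the
product of the `B / (B ∩ x V)` for finitely many discrete valuation rings `V`, the localizations of
`B` at the primes minimal over `x`, and the residue rings of `B` at these primes are finite over `C`
by induction.
-/

universe u v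

/-! ### Global transforms and essential discrete valuation rings -/

section GlobalTransform

variable {O : Type u} [CommRing O] [IsLocalRing O]

theorem exists_pow_maximalIdeal_le_annihilator {M : Type v} [AddCommGroup M] [Module O M]
    [Module.Finite O M] (h : ∀ t : M, ∃ k, ∀ y ∈ maximalIdeal O ^ k, y • t = 0) :
    ∃ k, maximalIdeal O ^ k ≤ Module.annihilator O M := by
  choose k hk using h
  obtain ⟨S, hS⟩ := Module.Finite.fg_top (R := O) (M := M)
  refine ⟨S.sup k, fun y hy ↦ ?_⟩
  rw [← Submodule.annihilator_top, ← hS, Submodule.mem_annihilator_span]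
  exact fun s ↦ hk s y (Ideal.pow_le_pow_right (Finset.le_sup s.2) hy)

variable {K : Type v} [Field K] [Algebra O K]

variable (O K) in
/-- The global transform of a local ring `(O, m)` in a field `K`: the elements multiplied into (the
image of) `O` by some power of `m`. -/
def globalTransform : Subalgebra O K where
  carrier := {s | ∃ n, ∀ y ∈ maximalIdeal O ^ n, y • s ∈ (1 : Submodule O K)}
  mul_mem' := by
    rintro a b ⟨n, hn⟩ ⟨k, hk⟩
    refine ⟨n + k, fun y hy ↦ ?_⟩
    rw [pow_add] at hy
    induction hy using Submodule.mul_induction_on' with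
    | mem_mul_mem u hu v hv =>
      rw [← smul_mul_smul_comm, ← one_mul (1 : Submodule O K)]
      exact Submodule.mul_mem_mul (hn u hu) (hk v hv)
    | add u _ v _ hu hv => rw [add_smul]; exact add_mem hu hv
  add_mem' := by
    rintro a b ⟨n, hn⟩ ⟨k, hk⟩
    refine ⟨n + k, fun y hy ↦ ?_⟩
    rw [smul_add]
    exact add_mem (hn y (Ideal.pow_le_pow_right (by omega) hy))
      (hk y (Ideal.pow_le_pow_right (by omega) hy))
  algebraMap_mem' r := ⟨0, fun y _ ↦ Submodule.mem_one.2 ⟨y * r, by simp [Algebra.smul_def]⟩⟩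

variable [IsNoetherianRing O]

theorem isArtinian_of_pow_maximalIdeal_le_annihilator {M : Type v} [AddCommGroup M] [Module O M]
    [Module.Finite O M] {k : ℕ} (h : maximalIdeal O ^ k ≤ Module.annihilator O M) :
    IsArtinian O M := by
  have torsion : Module.IsTorsionBySet O M (maximalIdeal O ^ (k + 1) : Ideal O) := fun t y ↦
    Module.mem_annihilator.1 (h (Ideal.pow_le_pow_right k.le_succ y.2)) t
  let := torsion.module
  have : IsScalarTower O (O ⧸ maximalIdeal O ^ (k + 1)) M := torsion.isScalarTower
  have : IsArtinianRing (O ⧸ maximalIdeal O ^ (k + 1)) := by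
    apply quotient_artinian_of_mem_minimalPrimes_of_isLocalRing
    refine ⟨⟨inferInstance, Ideal.pow_le_self k.succ_ne_zero⟩, ?_⟩
    rintro q ⟨_, hle⟩ -
    exact (Ideal.IsPrime.pow_le_iff k.succ_ne_zero).1 hle
  have : Module.Finite (O ⧸ maximalIdeal O ^ (k + 1)) M := .of_restrictScalars_finite O _ _
  exact isArtinian_of_surjective_algebraMap (S := O) (R := O ⧸ maximalIdeal O ^ (k + 1))
    Ideal.Quotient.mk_surjective

theorem isArtinian_map_mkQ_one_of_le_globalTransform {N : Submodule O K} (hN : N.FG)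
    (hNG : N ≤ Subalgebra.toSubmodule (globalTransform O K)) :
    IsArtinian O (N.map (1 : Submodule O K).mkQ) := by
  have : Module.Finite O (N.map (1 : Submodule O K).mkQ) := Module.Finite.iff_fg.2 (hN.map _)
  obtain ⟨k, hk⟩ := exists_pow_maximalIdeal_le_annihilator
      (M := N.map (1 : Submodule O K).mkQ) (O := O) fun ⟨_, s, hs, hst⟩ ↦ by
    obtain ⟨k, hk⟩ := hNG hs
    refine ⟨k, fun y hy ↦ Subtype.ext ?_⟩
    simpa [← hst, ← Submodule.Quotient.mk_smul] using hk y hy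
  exact isArtinian_of_pow_maximalIdeal_le_annihilator hk

theorem exists_forall_ge_eq_of_isArtinian {R M : Type*} [Ring R] [AddCommGroup M] [Module R M]
    {S : Submodule R M} [IsArtinian R S] {C : ℕ → Submodule R M} (hC : Antitone C)
    (hCS : ∀ n, C n ≤ S) : ∃ n, ∀ m ≥ n, C m = C n := by
  obtain ⟨n, hn⟩ := IsArtinian.monotone_stabilizes
    ⟨fun n ↦ OrderDual.toDual ((C n).submoduleOf S), fun _ _ h ↦ Submodule.comap_mono (hC h)⟩
  refine ⟨n, fun m hm ↦ ?_⟩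
  have := congrArg (Submodule.map S.subtype) (OrderDual.toDual_inj.1 (hn m hm))
  rwa [Submodule.submoduleOf, Submodule.submoduleOf, Submodule.map_comap_subtype,
    Submodule.map_comap_subtype, inf_eq_right.2 (hCS _), inf_eq_right.2 (hCS _), eq_comm] at this

/-- The submodules `xⁿD ∩ x⁻¹O` become stationary modulo `O`. -/
theorem exists_sub_mul_mem_one_of_le_globalTransform {D : Subalgebra O K}
    (hD : D ≤ globalTransform O K) {x : O} (hx : algebraMap O K x ≠ 0) :
    ∃ n, ∀ m ≥ n, ∀ d ∈ D, x ^ (m + 1) • d ∈ (1 : Submodule O K) →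
      ∃ d' ∈ D, x ^ m • (d - x • d') ∈ (1 : Submodule O K) := by
  let E : Submodule O K := Submodule.span O {(algebraMap O K x)⁻¹}
  have hE (s : K) : s ∈ E ↔ x • s ∈ (1 : Submodule O K) := by
    simp only [E, Submodule.mem_span_singleton, Submodule.mem_one, Algebra.smul_def,
      eq_comm (a := _ * (algebraMap O K x)⁻¹), eq_mul_inv_iff_mul_eq₀ hx]
    simp only [mul_comm, eq_comm]
  let N (n : ℕ) : Submodule O K := (Subalgebra.toSubmodule D).map (x ^ n • LinearMap.id) ⊓ E
  have hND n : N n ≤ Subalgebra.toSubmodule D := by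
    rintro _ ⟨⟨d, hd, rfl⟩, -⟩
    exact Submodule.smul_mem _ _ hd
  have hNanti : Antitone N := antitone_nat_of_succ_le fun n ↦ inf_le_inf_right _ <| by
    rintro _ ⟨d, hd, rfl⟩
    exact ⟨x • d, Submodule.smul_mem _ _ hd, by simp [← mul_smul, mul_comm, pow_succ]⟩
  have := isArtinian_map_mkQ_one_of_le_globalTransform
    (.of_le (Submodule.fg_span_singleton _) inf_le_right) ((hND 0).trans hD)
  obtain ⟨n, hn⟩ := exists_forall_ge_eq_of_isArtinian
    (C := fun n ↦ (N n).map (1 : Submodule O K).mkQ) (fun _ _ h ↦ Submodule.map_mono (hNanti h))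
    (fun n ↦ Submodule.map_mono (hNanti n.zero_le))
  refine ⟨n, fun m hm d hd hxd ↦ ?_⟩
  have hxm : x ^ m • d ∈ N m := ⟨⟨d, hd, rfl⟩, (hE _).2 (by rwa [← mul_smul, ← pow_succ'])⟩
  have hmap := Submodule.mem_map_of_mem (f := (1 : Submodule O K).mkQ) hxm
  rw [hn m hm, ← hn (m + 1) (by omega)] at hmap
  obtain ⟨_, ⟨⟨d', hd', rfl⟩, -⟩, h⟩ := hmap
  refine ⟨d', hd', ?_⟩
  rw [smul_sub, ← mul_smul, ← pow_succ]
  exact (Submodule.Quotient.eq _).1 h.symm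

theorem finite_quotient_span_singleton_of_le_globalTransform [FaithfulSMul O K] {D : Subalgebra O K}
    (hD : D ≤ globalTransform O K) {x : O} (hx : x ∈ maximalIdeal O) (hx0 : x ≠ 0) :
    Module.Finite O (D ⧸ Ideal.span {algebraMap O D x}) := by
  have hxK : algebraMap O K x ≠ 0 := by simpa using hx0
  obtain ⟨n, hn⟩ := exists_sub_mul_mem_one_of_le_globalTransform hD hxK
  let N : Submodule O D := (Submodule.span O {(algebraMap O K x ^ n)⁻¹}).comap D.val.toLinearMap
  have hN : N.FG := by
    have := isNoetherian_of_fg_of_noetherian _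
      (Submodule.fg_span_singleton (R := O) (algebraMap O K x ^ n)⁻¹)
    exact Submodule.fg_of_fg_map_injective _ Subtype.val_injective
      (Submodule.FG.of_le (Submodule.fg_span_singleton _) (Submodule.map_comap_le _ _))
  have reduce (j : ℕ) (d : D) (hd : x ^ (n + j) • (d : K) ∈ (1 : Submodule O K)) :
      ∃ e ∈ N, d - e ∈ Ideal.span {algebraMap O D x} := by
    induction j generalizing d with
    | zero =>
      obtain ⟨o, ho⟩ := Submodule.mem_one.1 hd
      refine ⟨d, Submodule.mem_span_singleton.2 ⟨o, ?_⟩, by simp⟩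
      rw [Algebra.smul_def, ho, Algebra.smul_def, add_zero, map_pow]
      rw [mul_right_comm, mul_inv_cancel₀ (pow_ne_zero n hxK), one_mul]
      rfl
    | succ j ih =>
      obtain ⟨d', hd', h⟩ := hn (n + j) (by omega) d d.2 hd
      obtain ⟨e, he, hde⟩ := ih (d - x • ⟨d', hd'⟩) h
      refine ⟨e, he, ?_⟩
      rw [sub_right_comm] at hde
      refine (Submodule.sub_mem_iff_left _ ?_).1 hde
      exact Ideal.mem_span_singleton.2 ⟨⟨d', hd'⟩, Algebra.smul_def _ _⟩
  have := Module.Finite.iff_fg.2 hN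
  refine .of_surjective ((Ideal.Quotient.mkₐ O _).toLinearMap ∘ₗ N.subtype) fun z ↦ ?_
  obtain ⟨d, rfl⟩ := Ideal.Quotient.mk_surjective z
  obtain ⟨k, hk⟩ := hD d.2
  obtain ⟨e, he, hde⟩ := reduce k d (by
    rw [pow_add, mul_smul]; exact Submodule.smul_mem _ _ (hk _ (Ideal.pow_mem_pow hx k)))
  exact ⟨⟨e, he⟩, (Ideal.Quotient.eq.2 hde).symm⟩

theorem exists_isPrime_colon_singleton_smul {A M : Type*} [CommRing A] [IsNoetherianRing A]
    [AddCommGroup M] [Module A M] {N : Submodule A M} {s : M} (hs : s ∉ N) :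
    ∃ (a : A) (p : Ideal A), p.IsPrime ∧ (∀ r, r ∈ p ↔ r • a • s ∈ N) := by
  let s' : Submodule.span A {N.mkQ s} := ⟨N.mkQ s, Submodule.mem_span_singleton_self _⟩
  have hs' : s' ≠ 0 := fun h ↦ hs ((Submodule.Quotient.mk_eq_zero _).1 (congrArg Subtype.val h))
  obtain ⟨p, hp, -⟩ := exists_le_isAssociatedPrime_of_isNoetherianRing A s' hs'
  obtain ⟨hp, ⟨y, hy⟩, rfl⟩ := isAssociatedPrime_iff.1 hp
  obtain ⟨a, rfl⟩ := Submodule.mem_span_singleton.1 hy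
  refine ⟨a, _, hp, fun r ↦ ?_⟩
  rw [Submodule.mem_colon_singleton, Submodule.mem_bot, ← Submodule.Quotient.mk_eq_zero,
    Subtype.ext_iff]
  rfl

section FractionField

variable [IsFractionRing O K]

theorem isNoetherianRing_of_le_globalTransform {D : Subalgebra O K}
    (hD : D ≤ globalTransform O K) : IsNoetherianRing D := by
  refine ⟨fun I ↦ ?_⟩
  obtain rfl | hI := eq_or_ne I ⊥
  · exact Submodule.fg_bot
  obtain ⟨a, haI, ha0⟩ : ∃ a : O, algebraMap O D a ∈ I ∧ a ≠ 0 := by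
    obtain ⟨y, hy, hy0⟩ := Submodule.exists_mem_ne_zero_of_ne_bot hI
    obtain ⟨a, b, hb, hab⟩ := IsFractionRing.div_surjective O (y : K)
    have hb0 : algebraMap O K b ≠ 0 := by simpa using nonZeroDivisors.ne_zero hb
    rw [div_eq_iff hb0] at hab
    have hmul : algebraMap O D a = y * algebraMap O D b := Subtype.ext hab
    refine ⟨a, hmul ▸ Ideal.mul_mem_right _ I hy, ?_⟩
    rintro rfl
    simp [hb0, hy0] at hab
  by_cases ha : a ∈ maximalIdeal O
  · have := finite_quotient_span_singleton_of_le_globalTransform hD ha ha0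
    have : IsNoetherianRing (D ⧸ Ideal.span {algebraMap O D a}) :=
      isNoetherian_of_tower O (isNoetherian_of_isNoetherianRing_of_finite _ _)
    refine Ideal.fg_of_fg_map_of_fg_inf_ker_of_surjective
      (f := Ideal.Quotient.mk (Ideal.span {algebraMap O D a}))
      (IsNoetherian.noetherian _) ?_ Ideal.Quotient.mk_surjective
    rw [Ideal.mk_ker, inf_eq_right.2 ((Ideal.span_singleton_le_iff_mem _).2 haI)]
    exact Submodule.fg_span_singleton _
  · rw [Ideal.eq_top_of_isUnit_mem I haI (.map _ (by simpa using ha))]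
    exact Module.Finite.fg_top

/-- If `m s` is integral over `O`, it lies in a finite `O`-algebra; a common denominator of the
latter multiplies every power of `s` into the global transform. -/
theorem isIntegral_globalTransform_of_smul_mem_integralClosure {s : K}
    (hs : ∀ y ∈ maximalIdeal O, y • s ∈ integralClosure O K) :
    IsIntegral (globalTransform O K) s := by
  let T : Submodule O K :=
    Submodule.map (Algebra.ofId O K).toLinearMap (maximalIdeal O) * Submodule.span O {s}
  have hT_int : T ≤ Subalgebra.toSubmodule (integralClosure O K) := Submodule.mul_le.2 <| by
    rintro _ ⟨y, hy, rfl⟩ t ht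
    obtain ⟨r, rfl⟩ := Submodule.mem_span_singleton.1 ht
    rw [mul_smul_comm]
    exact Submodule.smul_mem _ r (Algebra.smul_def y s ▸ hs y hy)
  obtain ⟨S, hS⟩ : T.FG :=
    (Submodule.FG.map _ (IsNoetherian.noetherian _)).mul (Submodule.fg_span_singleton s)
  have hfg : (Subalgebra.toSubmodule (Algebra.adjoin O (S : Set K))).FG :=
    fg_adjoin_of_finite S.finite_toSet fun t ht ↦ hT_int (hS ▸ Submodule.subset_span ht)
  have hT_le : T ≤ Subalgebra.toSubmodule (Algebra.adjoin O (S : Set K)) :=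
    hS ▸ Submodule.span_le.2 Algebra.subset_adjoin
  have hpow (j : ℕ) (y) (hy : y ∈ maximalIdeal O ^ j) :
      y • s ^ j ∈ Algebra.adjoin O (S : Set K) := by
    have hmem : y • s ^ j ∈ T ^ j := by
      rw [Algebra.smul_def, mul_pow, ← Submodule.map_pow]
      exact Submodule.mul_mem_mul ⟨y, hy, rfl⟩
        (Submodule.pow_mem_pow _ (Submodule.mem_span_singleton_self s) j)
    exact Submodule.pow_induction_on_left (C := (· ∈ Algebra.adjoin O (S : Set K))) T
      (Subalgebra.algebraMap_mem _) (fun _ _ ↦ add_mem) (fun t ht _ ↦ mul_mem (hT_le ht)) hmem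
  obtain ⟨f, hf, hfS⟩ := FractionalIdeal.isFractional_of_fg (S := nonZeroDivisors O) hfg
  have := isNoetherianRing_of_le_globalTransform (le_refl (globalTransform O K))
  refine IsAlmostIntegral.isIntegral ⟨algebraMap O _ f, ?_, fun j ↦
    ⟨⟨f • s ^ j, j, fun y hy ↦ ?_⟩, Algebra.smul_def f (s ^ j)⟩⟩
  · simpa [Subtype.ext_iff] using nonZeroDivisors.ne_zero hf
  · rw [smul_comm]
    exact Submodule.mem_one.2 (hfS _ (hpow j y hy))

theorem exists_mem_globalTransform_notMem_one {s : K}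
    (hs : ∀ y ∈ maximalIdeal O, y • s ∈ integralClosure O K) (hsO : ¬ IsIntegral O s) :
    ∃ g ∈ globalTransform O K, g ∉ (1 : Submodule O K) := by
  by_contra! hle
  have : Algebra.IsIntegral O (globalTransform O K) := ⟨fun g ↦ by
    obtain ⟨o, ho⟩ := Submodule.mem_one.1 (hle g g.2)
    rw [show g = algebraMap O _ o from Subtype.ext ho.symm]
    exact isIntegral_algebraMap⟩
  exact hsO (isIntegral_trans s (isIntegral_globalTransform_of_smul_mem_integralClosure hs))

theorem isDiscreteValuationRing_of_smul_mem_one [IsDomain O] {y : K} (hy : ¬ IsIntegral O y)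
    (h : ∀ a ∈ maximalIdeal O, a • y ∈ (1 : Submodule O K)) : IsDiscreteValuationRing O := by
  have inj := IsFractionRing.injective O K
  obtain ⟨z, hz, hzy⟩ : ∃ z ∈ maximalIdeal O, z • y = 1 := by
    by_contra! hne
    refine hy (isIntegral_of_smul_mem_submodule
      (Submodule.map (Algebra.linearMap O K) (maximalIdeal O)) ?_
      (.map _ (IsNoetherian.noetherian _)) y ?_)
    · rw [Ne, ← Submodule.map_bot (Algebra.linearMap O K),
        (Submodule.map_injective_of_injective inj).eq_iff, ← isField_iff_maximalIdeal_eq]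
      intro hO
      let := hO.toField
      obtain ⟨r, rfl⟩ := (IsFractionRing.surjective_iff_isField (K := K)).2 hO y
      exact hy isIntegral_algebraMap
    · rintro _ ⟨a, ha, rfl⟩
      obtain ⟨o, ho⟩ := Submodule.mem_one.1 (h a ha)
      refine ⟨o, ?_, by simpa [Algebra.smul_def, mul_comm] using ho⟩
      by_contra hunit
      obtain ⟨u, rfl⟩ : IsUnit o := by simpa using hunit
      refine hne (↑u⁻¹ * a) (Ideal.mul_mem_left _ _ ha) ?_
      rw [mul_smul, ← ho, Algebra.smul_def, ← map_mul, Units.inv_mul, map_one]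
  have hz0 : z ≠ 0 := by rintro rfl; simp at hzy
  have hfield : ¬ IsField O := fun hO ↦ hz0 (by
    simpa [(isField_iff_maximalIdeal_eq).1 hO] using hz)
  refine ((IsDiscreteValuationRing.TFAE O hfield).out 0 4 :).2 ⟨z, le_antisymm (fun a ha ↦ ?_)
    ((Ideal.span_singleton_le_iff_mem _).2 hz)⟩
  obtain ⟨o, ho⟩ := Submodule.mem_one.1 (h a ha)
  refine Ideal.mem_span_singleton'.2 ⟨o, inj ?_⟩
  rw [map_mul, ho, mul_comm, ← Algebra.smul_def, smul_comm, hzy, Algebra.smul_def, mul_one]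

end FractionField

end GlobalTransform

section LocalizationInField

variable {A : Type u} {K : Type v} [CommRing A] [IsDomain A] [Field K] [Algebra A K]
  [IsFractionRing A K]

variable (K) in
/-- The localization of a domain at a prime ideal, as a subring of its field of fractions. -/
abbrev localizationInField (p : Ideal A) [p.IsPrime] : Subalgebra A K :=
  Localization.subalgebra.ofField K p.primeCompl p.primeCompl_le_nonZeroDivisors

variable {p : Ideal A} [p.IsPrime]

theorem mem_localizationInField_iff {v : K} :
    v ∈ localizationInField K p ↔ ∃ t ∉ p, t • v ∈ (1 : Submodule A K) := by
  have ht0 {t : A} (ht : t ∉ p) : algebraMap A K t ≠ 0 := by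
    simpa using fun h : t = 0 ↦ ht (h ▸ p.zero_mem)
  constructor
  · rintro ⟨a, t, ht, rfl⟩
    exact ⟨t, ht, Submodule.mem_one.2
      ⟨a, by rw [Algebra.smul_def, mul_left_comm, mul_inv_cancel₀ (ht0 ht), mul_one]⟩⟩
  · rintro ⟨t, ht, htv⟩
    obtain ⟨a, ha⟩ := Submodule.mem_one.1 htv
    exact ⟨a, t, ht, by rw [ha, Algebra.smul_def, mul_comm, inv_mul_cancel_left₀ (ht0 ht)]⟩

theorem exists_isIntegral_smul_of_isIntegral_localizationInField {s : K}
    (hs : IsIntegral (localizationInField K p) s) : ∃ t ∉ p, IsIntegral A (t • s) := by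
  obtain ⟨t, ht⟩ := IsIntegral.exists_multiple_integral_of_isLocalization p.primeCompl s hs
  exact ⟨t, t.2, ht⟩

instance : IsLocalRing (localizationInField K p) := IsLocalization.AtPrime.isLocalRing _ p

instance [IsNoetherianRing A] : IsNoetherianRing (localizationInField K p) :=
  IsLocalization.isNoetherianRing p.primeCompl _ inferInstance

theorem algebraMap_mem_maximalIdeal_localizationInField_iff {a : A} :
    algebraMap A (localizationInField K p) a ∈ maximalIdeal _ ↔ a ∈ p :=
  IsLocalization.AtPrime.to_map_mem_maximal_iff _ p a

end LocalizationInField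

section IntegralTransform

variable {O : Type u} {K : Type v} [CommRing O] [IsLocalRing O] [Field K] [Algebra O K]

variable (O K) in
/-- The part of the global transform that is integral over `O`. Unlike the integral closure of `O`
it is always Noetherian, and it still has enough localizations that are discrete valuation rings to
detect integrality over `O`. -/
def integralTransform : Subalgebra O K := integralClosure O K ⊓ globalTransform O K

instance : Algebra.IsIntegral O (integralTransform O K) :=
  ⟨fun d ↦ (isIntegral_algHom_iff (integralTransform O K).val Subtype.val_injective).1 d.2.1⟩

theorem isIntegral_integralTransform_iff {s : K} :
    IsIntegral (integralTransform O K) s ↔ IsIntegral O s :=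
  ⟨isIntegral_trans s, IsIntegral.tower_top⟩

theorem algebraMap_mem_of_isMaximal_integralTransform {n : Ideal (integralTransform O K)}
    [n.IsMaximal] {y : O} (hy : y ∈ maximalIdeal O) : algebraMap O _ y ∈ n := by
  rw [← eq_maximalIdeal (Ideal.isMaximal_comap_of_isIntegral_of_isMaximal (R := O) n)] at hy
  exact hy

variable [IsNoetherianRing O] [IsFractionRing O K]

instance : IsNoetherianRing (integralTransform O K) :=
  isNoetherianRing_of_le_globalTransform inf_le_right

theorem isDiscreteValuationRing_localizationInField_of_notMem
    {n : Ideal (integralTransform O K)} [n.IsMaximal] {g : K} (hg : g ∈ globalTransform O K)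
    (hgn : g ∉ localizationInField K n) :
    IsDiscreteValuationRing (localizationInField K n) := by
  set L := localizationInField K n
  obtain ⟨d, P, hP, hPd⟩ := exists_isPrime_colon_singleton_smul (N := Subalgebra.toSubmodule L) hgn
  have hdg : d • g ∈ globalTransform O K := mul_mem d.2.2 hg
  have hPn : P = n := by
    have hcomap : maximalIdeal O ≤ P.comap (algebraMap O _) := by
      obtain ⟨k, hk⟩ := hdg
      refine Ideal.IsPrime.le_of_pow_le (n := k) fun y hy ↦ (hPd _).2 ?_
      obtain ⟨o, ho⟩ := Submodule.mem_one.1 (hk y hy)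
      rw [algebraMap_smul, ← ho]
      exact L.algebraMap_mem (algebraMap O (integralTransform O K) o)
    have : P.IsMaximal := Ideal.isMaximal_of_isIntegral_of_isMaximal_comap (R := O) P
      ((maximalIdeal.isMaximal O).eq_of_le (Ideal.comap_ne_top _ hP.ne_top) hcomap ▸ inferInstance)
    refine this.eq_of_le Ideal.IsPrime.ne_top' fun r hr ↦ ?_
    by_contra hrn
    refine hP.ne_top (P.eq_top_iff_one.2 ((hPd 1).2 ?_))
    obtain ⟨t, ht, h⟩ := mem_localizationInField_iff.1 ((hPd r).1 hr)
    exact mem_localizationInField_iff.2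
      ⟨t * r, ‹n.IsMaximal›.isPrime.mul_notMem ht hrn, by rwa [one_smul, mul_smul]⟩
  subst hPn
  have hdgL : d • g ∉ L := fun h ↦ hP.ne_top (P.eq_top_iff_one.2 ((hPd 1).2 (by rwa [one_smul])))
  refine isDiscreteValuationRing_of_smul_mem_one (K := K) (y := d • g) (fun hint ↦ hdgL ?_) ?_
  · obtain ⟨t, ht, htint⟩ := exists_isIntegral_smul_of_isIntegral_localizationInField hint
    refine mem_localizationInField_iff.2 ⟨t, ht, Submodule.mem_one.2 ⟨⟨t • d • g,
      isIntegral_integralTransform_iff.1 htint, mul_mem t.2.2 hdg⟩, rfl⟩⟩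
  · rw [← IsLocalization.AtPrime.map_eq_maximalIdeal P]
    suffices h : P.map (algebraMap _ L) ≤ (1 : Submodule L K).colon {d • g} from
      fun a ha ↦ Submodule.mem_colon_singleton.1 (h ha)
    refine Ideal.map_le_iff_le_comap.2 fun r hr ↦ Submodule.mem_colon_singleton.2 ?_
    rw [algebraMap_smul]
    exact Submodule.mem_one.2 ⟨⟨_, (hPd r).1 hr⟩, rfl⟩

end IntegralTransform

section EssentialDVR

variable {K : Type v} [Field K]

/-- `V` is an essential discrete valuation ring of the integral closure `B` of `A` in `K`, that is
`V` is the localization of `B` at a prime ideal `q`, and its residue field is finite over the image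
of `A` up to denominators from `A`. Being outside `q` is expressed by having value one. -/
structure IsEssentialDVR (A : Type u) [CommRing A] [Algebra A K] (V : ValuationSubring K) :
    Prop where
  isDiscreteValuationRing : IsDiscreteValuationRing V
  algebraMap_mem (a : A) : algebraMap A K a ∈ V
  exists_isIntegral_mul {v : K} (hv : v ∈ V) :
    ∃ t, IsIntegral A t ∧ V.valuation t = 1 ∧ IsIntegral A (t * v)
  exists_finset_isIntegral : ∃ S : Finset K, (∀ s ∈ S, IsIntegral A s) ∧ ∀ v ∈ V,
    ∃ a : A, V.valuation (algebraMap A K a) = 1 ∧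
      ∃ w ∈ Submodule.span A (S : Set K), V.valuation (a • v - w) < 1

end EssentialDVR

section ValuationLocalizationInField

variable {A : Type u} {K : Type v} [CommRing A] [IsDomain A] [Field K] [Algebra A K]
  [IsFractionRing A K] {p : Ideal A} [p.IsPrime] {V : ValuationSubring K}

theorem mem_iff_mem_localizationInField (hV : V.toSubring = (localizationInField K p).toSubring)
    {v : K} : v ∈ V ↔ v ∈ localizationInField K p := by
  rw [← ValuationSubring.mem_toSubring, hV, Subalgebra.mem_toSubring]

theorem valuation_algebraMap_eq_one_iff (hV : V.toSubring = (localizationInField K p).toSubring)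
    {a : A} : V.valuation (algebraMap A K a) = 1 ↔ a ∉ p := by
  have hmem {v : K} : v ∈ V ↔ _ := mem_iff_mem_localizationInField hV
  have ha : V.valuation (algebraMap A K a) ≤ 1 :=
    (V.valuation_le_one_iff _).2 (hmem.2 (Subalgebra.algebraMap_mem _ a))
  constructor
  · intro h hap
    have ha0 : algebraMap A K a ≠ 0 := by rintro h0; simp [h0] at h
    have hinv : (algebraMap A K a)⁻¹ ∈ V := (V.valuation_le_one_iff _).1 (by simp [h])
    obtain ⟨t, ht, hta⟩ := mem_localizationInField_iff.1 (hmem.1 hinv)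
    obtain ⟨b, hb⟩ := Submodule.mem_one.1 hta
    rw [Algebra.smul_def, eq_mul_inv_iff_mul_eq₀ ha0, ← map_mul] at hb
    exact ht (IsFractionRing.injective A K hb ▸ p.mul_mem_left b hap)
  · intro hap
    have ha0 : algebraMap A K a ≠ 0 := by simpa using fun h : a = 0 ↦ hap (h ▸ p.zero_mem)
    have hinv : (algebraMap A K a)⁻¹ ∈ V := hmem.2 (mem_localizationInField_iff.2
      ⟨a, hap, Submodule.mem_one.2 ⟨1, by simp [Algebra.smul_def, ha0]⟩⟩)
    refine le_antisymm ha ?_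
    have := (V.valuation_le_one_iff _).2 hinv
    rwa [map_inv₀, inv_le_one₀ (by simpa [zero_lt_iff] using ha0)] at this

theorem valuation_algebraMap_lt_one_iff (hV : V.toSubring = (localizationInField K p).toSubring)
    {a : A} : V.valuation (algebraMap A K a) < 1 ↔ a ∈ p := by
  have ha : algebraMap A K a ∈ V.toSubring := hV ▸ Subalgebra.algebraMap_mem _ a
  rw [((V.valuation_le_one_iff _).2 ha).lt_iff_ne, Ne, valuation_algebraMap_eq_one_iff hV, not_not]

end ValuationLocalizationInField

section LocalEssentialDVR

variable {O : Type u} {K : Type v} [CommRing O] [IsLocalRing O] [Field K] [Algebra O K]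
  [IsFractionRing O K]

variable (O K) in
/-- The discrete valuation rings among the localizations of `integralTransform O K` at its maximal
ideals. -/
def localEssentialDVRs : Set (ValuationSubring K) :=
  {V | ∃ (n : Ideal (integralTransform O K)) (_ : n.IsMaximal),
    V.toSubring = (localizationInField K n).toSubring ∧
      IsDiscreteValuationRing (localizationInField K n)}

theorem valuation_lt_one_of_mem_localEssentialDVRs {V : ValuationSubring K}
    (hV : V ∈ localEssentialDVRs O K) {a : O} (ha : a ∈ maximalIdeal O) :
    V.valuation (algebraMap O K a) < 1 := by
  obtain ⟨n, _, hV, -⟩ := hV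
  exact (valuation_algebraMap_lt_one_iff hV).2 (algebraMap_mem_of_isMaximal_integralTransform ha)

variable [IsNoetherianRing O]

theorem finite_setOf_isMaximal_integralTransform {x : O} (hx : x ∈ maximalIdeal O) (hx0 : x ≠ 0) :
    {n : Ideal (integralTransform O K) | n.IsMaximal}.Finite := by
  have := finite_quotient_span_singleton_of_le_globalTransform (D := integralTransform O K)
    inf_le_right hx hx0
  set I := Ideal.span {algebraMap O (integralTransform O K) x}
  refine ((Algebra.QuasiFinite.finite_primesOver (maximalIdeal O)).image
    (Ideal.comap (Ideal.Quotient.mk I))).subset fun n (hn : n.IsMaximal) ↦ ?_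
  have hle : I ≤ n :=
    (Ideal.span_singleton_le_iff_mem _).2 (algebraMap_mem_of_isMaximal_integralTransform hx)
  have hcomap : (n.map (Ideal.Quotient.mk I)).comap (Ideal.Quotient.mk I) = n :=
    Ideal.comap_map_of_surjective' _ Ideal.Quotient.mk_surjective n |>.trans
      (sup_eq_left.2 (by rwa [Ideal.mk_ker]))
  refine ⟨_, ⟨Ideal.map_isPrime_of_surjective Ideal.Quotient.mk_surjective
    (by rwa [Ideal.mk_ker]), ⟨?_⟩⟩, hcomap⟩
  have := eq_maximalIdeal (Ideal.isMaximal_comap_of_isIntegral_of_isMaximal (R := O) n)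
  rw [← this, Ideal.under_def, ← Ideal.Quotient.mk_comp_algebraMap, ← Ideal.comap_comap, hcomap]

theorem finite_localEssentialDVRs {x : O} (hx : x ∈ maximalIdeal O) (hx0 : x ≠ 0) :
    (localEssentialDVRs O K).Finite := by
  have hfin := finite_setOf_isMaximal_integralTransform (K := K) hx hx0
  refine (hfin.biUnion (t := fun n ↦ {V | ∃ _ : n.IsMaximal,
    V.toSubring = (localizationInField K n).toSubring}) fun n _ ↦ ?_).subset ?_
  · refine Set.Subsingleton.finite ?_
    rintro V ⟨_, hV⟩ W ⟨_, hW⟩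
    exact ValuationSubring.toSubring_injective (hV.trans hW.symm)
  · rintro V ⟨n, hn, hV, -⟩
    exact Set.mem_biUnion (x := n) hn ⟨hn, hV⟩

theorem exists_finset_forall_sub_mem {R M : Type*} [CommRing R] [AddCommGroup M] [Module R M]
    (N : Submodule R M) [Module.Finite R (M ⧸ N)] :
    ∃ S : Finset M, ∀ d, ∃ w ∈ Submodule.span R (S : Set M), d - w ∈ N := by
  classical
  obtain ⟨S, hS⟩ := Module.Finite.fg_top (R := R) (M := M ⧸ N)
  refine ⟨S.image (Function.surjInv N.mkQ_surjective), fun d ↦ ?_⟩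
  have hd : N.mkQ d ∈ (Submodule.span R (S.image (Function.surjInv N.mkQ_surjective) : Set M)).map
      N.mkQ := by
    simp [Submodule.map_span, Set.image_image, Function.surjInv_eq, hS]
  obtain ⟨w, hw, hwd⟩ := hd
  exact ⟨w, hw, (Submodule.Quotient.eq N).1 hwd.symm⟩

theorem exists_finset_valuation_sub_lt_one {n : Ideal (integralTransform O K)} [n.IsMaximal]
    {V : ValuationSubring K} (hV : V.toSubring = (localizationInField K n).toSubring)
    {x : O} (hx : x ∈ maximalIdeal O) (hx0 : x ≠ 0) :
    ∃ S : Finset K, (∀ s ∈ S, IsIntegral O s) ∧ ∀ v ∈ V,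
      ∃ w ∈ Submodule.span O (S : Set K), V.valuation (v - w) < 1 := by
  classical
  let I := (Ideal.span {algebraMap O (integralTransform O K) x}).restrictScalars O
  have : Module.Finite O (integralTransform O K ⧸ I) :=
    finite_quotient_span_singleton_of_le_globalTransform inf_le_right hx hx0
  obtain ⟨S, hS⟩ := exists_finset_forall_sub_mem I
  refine ⟨S.image (↑), by simp only [Finset.mem_image]; rintro _ ⟨d, -, rfl⟩; exact d.2.1,
    fun v hv ↦ ?_⟩
  obtain ⟨t, ht, htv⟩ := mem_localizationInField_iff.1 ((mem_iff_mem_localizationInField hV).1 hv)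
  obtain ⟨d, hd⟩ := Submodule.mem_one.1 htv
  obtain ⟨t', htt'⟩ := Ideal.Quotient.exists_inv (Ideal.Quotient.eq_zero_iff_mem.not.2 ht)
  obtain ⟨t', rfl⟩ := Ideal.Quotient.mk_surjective t'
  obtain ⟨w, hw, hdw⟩ := hS (t' * d)
  have hwn : t' * d - w ∈ n := (Ideal.span_singleton_le_iff_mem _).2
    (algebraMap_mem_of_isMaximal_integralTransform hx) hdw
  have htn : 1 - t * t' ∈ n := by
    rw [← Ideal.Quotient.eq_zero_iff_mem, map_sub, map_mul, htt', map_one, sub_self]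
  refine ⟨w, ?_, ?_⟩
  · rw [Finset.coe_image]
    exact Submodule.map_span (integralTransform O K).val.toLinearMap S ▸
      Submodule.mem_map_of_mem hw
  have hdecomp : v - w = algebraMap _ K (1 - t * t') * v + algebraMap _ K (t' * d - w) := by
    simp only [Algebra.smul_def] at hd
    rw [map_sub, map_sub, map_mul, map_mul, map_one, hd]
    rw [show algebraMap _ K w = w from rfl]
    ring
  rw [hdecomp]
  refine Valuation.map_add_lt _ ?_ ((valuation_algebraMap_lt_one_iff hV).2 hwn)
  rw [map_mul]
  exact mul_lt_one_of_lt_of_le ((valuation_algebraMap_lt_one_iff hV).2 htn)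
    ((V.valuation_le_one_iff v).2 hv)

theorem localEssentialDVRs_isEssentialDVR {V : ValuationSubring K}
    (hV : V ∈ localEssentialDVRs O K)
    {x : O} (hx : x ∈ maximalIdeal O) (hx0 : x ≠ 0) : IsEssentialDVR O V := by
  obtain ⟨n, hn, hV, hDVR⟩ := hV
  have hmem {v : K} : v ∈ V ↔ _ := mem_iff_mem_localizationInField hV
  refine ⟨?_, fun a ↦ ?_, fun hv ↦ ?_, ?_⟩
  · exact IsDiscreteValuationRing.RingEquivClass.isDiscreteValuationRing
      (A := localizationInField K n)
      (RingEquiv.subringCongr hV.symm)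
  · exact hmem.2 (Subalgebra.algebraMap_mem _ (algebraMap O (integralTransform O K) a))
  · obtain ⟨t, ht, htv⟩ := mem_localizationInField_iff.1 (hmem.1 hv)
    obtain ⟨d, hd⟩ := Submodule.mem_one.1 htv
    refine ⟨t, t.2.1, (valuation_algebraMap_eq_one_iff hV).2 ht, ?_⟩
    have hmul : (t : K) * _ = d := hd.symm
    exact hmul ▸ d.2.1
  · obtain ⟨S, hS, hSV⟩ := exists_finset_valuation_sub_lt_one hV hx hx0
    exact ⟨S, hS, fun v hv ↦ ⟨1, by simp, by simpa using hSV v hv⟩⟩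

theorem isIntegral_of_subring_le {K : Type*} [CommRing K] {S T : Subring K} (hST : S ≤ T) {s : K}
    (hs : IsIntegral S s) : IsIntegral T s := by
  let := (Subring.inclusion hST).toAlgebra
  have : IsScalarTower S T K := .of_algebraMap_eq' rfl
  exact hs.tower_top

theorem isIntegral_of_forall_mem_localEssentialDVRs {s : K}
    (hs : ∀ y ∈ maximalIdeal O, IsIntegral O (y • s))
    (h : ∀ V ∈ localEssentialDVRs O K, s ∈ V) : IsIntegral O s := by
  by_contra hsO
  let N : Submodule (integralTransform O K) K :=
    Subalgebra.toSubmodule (integralClosure (integralTransform O K) K)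
  have hQ : N.colon {s} ≠ ⊤ := fun hQ ↦ hsO <| isIntegral_integralTransform_iff.1 <| by
    rw [← one_smul (integralTransform O K) s]
    exact Submodule.mem_colon_singleton.1 ((Ideal.eq_top_iff_one _).1 hQ)
  obtain ⟨n, hn, hQn⟩ := Ideal.exists_le_maximal _ hQ
  have hsn {t} (ht : t ∉ n) : ¬ IsIntegral (integralTransform O K) (t • s) :=
    fun h ↦ ht (hQn (Submodule.mem_colon_singleton.2 h))
  have hsL : s ∉ localizationInField K n := fun hsL ↦ by
    obtain ⟨t, ht, hts⟩ := mem_localizationInField_iff.1 hsL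
    obtain ⟨d, hd⟩ := Submodule.mem_one.1 hts
    exact hsn ht (hd ▸ isIntegral_algebraMap)
  obtain ⟨g, hg, hgL⟩ : ∃ g ∈ globalTransform O K, g ∉ localizationInField K n := by
    by_contra! hGL
    have hint : IsIntegral (localizationInField K n) s := isIntegral_of_subring_le
      (S := (globalTransform O K).toSubring) (T := (localizationInField K n).toSubring) hGL
      (isIntegral_globalTransform_of_smul_mem_integralClosure hs)
    obtain ⟨t, ht, hts⟩ := exists_isIntegral_smul_of_isIntegral_localizationInField hint
    exact hsn ht hts
  have := isDiscreteValuationRing_localizationInField_of_notMem hg hgL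
  exact hsL (h (.ofSubring (localizationInField K n).toSubring fun v ↦ by
    simpa [IsLocalization.IsInteger] using
      ValuationRing.isInteger_or_isInteger (localizationInField K n) v) ⟨n, hn, rfl, this⟩)

end LocalEssentialDVR

section GlobalEssentialDVR

variable {A : Type u} {K : Type v} [CommRing A] [IsDomain A] [Field K] [Algebra A K]
  [IsFractionRing A K]

theorem exists_smul_mem_span_of_mem_span_localizationInField {p : Ideal A} [p.IsPrime]
    {S T : Set K} (hST : ∀ s ∈ S, ∃ t ∉ p, t • s ∈ Submodule.span A T) {w : K}
    (hw : w ∈ Submodule.span (localizationInField K p) S) :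
    ∃ t ∉ p, t • w ∈ Submodule.span A T := by
  induction hw using Submodule.span_induction with
  | mem s hs => exact hST s hs
  | zero => exact ⟨1, p.ne_top_iff_one.1 Ideal.IsPrime.ne_top', by simp⟩
  | add s s' _ _ hs hs' =>
    obtain ⟨t, ht, hts⟩ := hs
    obtain ⟨t', ht', hts'⟩ := hs'
    refine ⟨t * t', Ideal.IsPrime.mul_notMem ‹_› ht ht', ?_⟩
    rw [smul_add, mul_smul t t' s', mul_comm t t', mul_smul]
    exact add_mem (Submodule.smul_mem _ _ hts) (Submodule.smul_mem _ _ hts')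
  | smul o s _ hs =>
    obtain ⟨t, ht, hts⟩ := hs
    obtain ⟨t', ht', hto⟩ := mem_localizationInField_iff.1 o.2
    obtain ⟨a, ha⟩ := Submodule.mem_one.1 hto
    refine ⟨t' * t, Ideal.IsPrime.mul_notMem ‹_› ht' ht, ?_⟩
    have : (t' * t) • o • s = a • t • s := by
      rw [Subalgebra.smul_def, smul_eq_mul, mul_smul, ← mul_smul_comm, ← smul_mul_assoc, ← ha,
        ← Algebra.smul_def]
    exact this ▸ Submodule.smul_mem _ _ hts

theorem IsEssentialDVR.of_localizationInField {p : Ideal A} [p.IsPrime] {V : ValuationSubring K}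
    (h : IsEssentialDVR (localizationInField K p) V) : IsEssentialDVR A V := by
  classical
  have hA (a : A) : algebraMap A K a ∈ V := h.algebraMap_mem (algebraMap A _ a)
  have hunit {t : A} (ht : t ∉ p) : V.valuation (algebraMap A K t) = 1 :=
    (V.valuation_eq_one_iff _).1 <| (IsLocalization.map_units (localizationInField K p)
      (⟨t, ht⟩ : p.primeCompl)).map
      ((algebraMap (localizationInField K p) K).codRestrict V.toSubring h.algebraMap_mem)
  refine ⟨h.isDiscreteValuationRing, hA, fun {v} hv ↦ ?_, ?_⟩
  · obtain ⟨t, ht, ht1, htv⟩ := h.exists_isIntegral_mul hv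
    obtain ⟨a, ha, hat⟩ := exists_isIntegral_smul_of_isIntegral_localizationInField ht
    obtain ⟨b, hb, hbt⟩ := exists_isIntegral_smul_of_isIntegral_localizationInField htv
    refine ⟨b • a • t, hat.smul b, ?_, ?_⟩
    · simp only [Algebra.smul_def, map_mul, hunit ha, hunit hb, ht1, mul_one]
    · rw [smul_mul_assoc, smul_mul_assoc, smul_comm]
      exact hbt.smul a
  · obtain ⟨S, hS, hSV⟩ := h.exists_finset_isIntegral
    choose! f hfp hf using
      fun s hs ↦ exists_isIntegral_smul_of_isIntegral_localizationInField (hS s hs)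
    refine ⟨S.image fun s ↦ f s • s, by simpa using hf, fun v hv ↦ ?_⟩
    obtain ⟨o, ho, w, hw, hov⟩ := hSV v hv
    obtain ⟨t, ht, htw⟩ := exists_smul_mem_span_of_mem_span_localizationInField
      (fun s hs ↦ ⟨f s, hfp s hs, Submodule.subset_span (Finset.mem_image_of_mem _ hs)⟩) hw
    obtain ⟨r, hr, hro⟩ := mem_localizationInField_iff.1 o.2
    obtain ⟨a, ha⟩ := Submodule.mem_one.1 hro
    have ho1 : V.valuation o = 1 := ho
    refine ⟨t * a, ?_, r • t • w, Submodule.smul_mem _ r htw, ?_⟩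
    · rw [map_mul, ha, Algebra.smul_def, map_mul, map_mul, hunit ht, hunit hr, ho1, one_mul,
        one_mul]
    · have hmul : (t * a) • v - r • t • w = (t * r) • (o • v - w) := by
        simp only [Subalgebra.smul_def, smul_eq_mul, Algebra.smul_def r, Algebra.smul_def t,
          Algebra.smul_def (t * _), map_mul, ha]
        ring
      rwa [hmul, Algebra.smul_def, map_mul, map_mul, map_mul, hunit ht, hunit hr, one_mul, one_mul]

theorem mem_associatedPrimes_of_smul_mem_localizationInField [IsNoetherianRing A] {p : Ideal A}
    [p.IsPrime] {y : K} (hy : y ∉ localizationInField K p)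
    (hpy : ∀ r ∈ p, r • y ∈ localizationInField K p) {x : A} (hx : x ∈ p) (hx0 : x ≠ 0) :
    p ∈ associatedPrimes A (A ⧸ Ideal.span {x}) := by
  classical
  have hxK : algebraMap A K x ≠ 0 := by simpa using hx0
  obtain ⟨t, ht, hty⟩ : ∃ t ∉ p, ∀ r ∈ p, r • t • y ∈ (1 : Submodule A K) := by
    obtain ⟨S, hS⟩ := (isNoetherianRing_iff_ideal_fg A).1 inferInstance p
    choose! f hfp hf using fun r hr ↦ mem_localizationInField_iff.1 (hpy r hr)
    refine ⟨∏ r ∈ S, f r, ?_, fun r hr ↦ ?_⟩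
    · rw [Ideal.IsPrime.prod_mem_iff]
      rintro ⟨r, hr, hfr⟩
      exact hfp r (hS ▸ Ideal.subset_span hr) hfr
    · rw [← hS] at hr
      induction hr using Submodule.span_induction with
      | mem r hr =>
        rw [← Finset.prod_erase_mul _ _ hr, mul_smul, smul_comm r, smul_comm r]
        exact Submodule.smul_mem _ _ (hf r (hS ▸ Ideal.subset_span hr))
      | zero => simp
      | add r r' _ _ h h' => rw [add_smul]; exact add_mem h h'
      | smul b r _ h => rw [smul_eq_mul, mul_smul]; exact Submodule.smul_mem _ _ h
  obtain ⟨c, hc⟩ := Submodule.mem_one.1 (hty x hx)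
  have hmem (r : A) : r * c ∈ Ideal.span {x} ↔ r • t • y ∈ (1 : Submodule A K) := by
    rw [Ideal.mem_span_singleton', Submodule.mem_one]
    refine exists_congr fun b ↦ ?_
    rw [← (IsFractionRing.injective A K).eq_iff, map_mul, map_mul, hc, Algebra.smul_def x,
      mul_left_comm, mul_comm, mul_right_inj' hxK, Algebra.smul_def r]
  refine isAssociatedPrime_iff.2 ⟨‹_›, Ideal.Quotient.mk _ c, ?_⟩
  ext r
  rw [Submodule.mem_colon_singleton, Submodule.mem_bot, Algebra.smul_def,
    Ideal.Quotient.algebraMap_eq, ← map_mul, Ideal.Quotient.eq_zero_iff_mem, hmem]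
  refine ⟨hty r, fun hr ↦ ?_⟩
  by_contra hrp
  exact hy (mem_localizationInField_iff.2
    ⟨r * t, Ideal.IsPrime.mul_notMem ‹_› hrp ht, by rwa [mul_smul]⟩)

theorem mem_associatedPrimes_of_not_globalTransform_le [IsNoetherianRing A] {p : Ideal A}
    [p.IsPrime] {g : K} (hg : g ∈ globalTransform (localizationInField K p) K)
    (hgp : g ∉ localizationInField K p) {x : A} (hx : x ∈ p) (hx0 : x ≠ 0) :
    p ∈ associatedPrimes A (A ⧸ Ideal.span {x}) := by
  obtain ⟨a, P, hP, hPa⟩ := exists_isPrime_colon_singleton_smul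
    (N := Subalgebra.toSubmodule (localizationInField K p)) hgp
  have hpP : p ≤ P := by
    obtain ⟨k, hk⟩ := hg
    refine Ideal.IsPrime.le_of_pow_le (n := k) fun r hr ↦ (hPa r).2 ?_
    have hrm : algebraMap A (localizationInField K p) r ∈ maximalIdeal _ ^ k := by
      rw [← IsLocalization.AtPrime.map_eq_maximalIdeal p, ← Ideal.map_pow]
      exact Ideal.mem_map_of_mem _ hr
    obtain ⟨o, ho⟩ := Submodule.mem_one.1 (hk _ hrm)
    rw [smul_comm, ← algebraMap_smul (localizationInField K p) r, ← ho]
    exact Submodule.smul_mem _ a o.2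
  refine mem_associatedPrimes_of_smul_mem_localizationInField (y := a • g) (fun h ↦ ?_)
    (fun r hr ↦ (hPa r).1 (hpP hr)) hx hx0
  exact hP.ne_top (P.eq_top_iff_one.2 ((hPa 1).2 (by rwa [one_smul])))

theorem mem_of_mem_associatedPrimes_quotient_span_singleton {R : Type*} [CommRing R] {x : R}
    {p : Ideal R} (hp : p ∈ associatedPrimes R (R ⧸ Ideal.span {x})) : x ∈ p :=
  IsAssociatedPrime.annihilator_le hp <| by
    rw [Submodule.annihilator_top, Ideal.annihilator_quotient]
    exact Ideal.mem_span_singleton_self x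

variable (K) in
/-- The essential discrete valuation rings of the integral closure of `A` in `K` lying over an
associated prime of `A ⧸ (x)`. -/
def essentialDVRs (x : A) : Set (ValuationSubring K) :=
  ⋃ p ∈ {p : PrimeSpectrum A | p.asIdeal ∈ associatedPrimes A (A ⧸ Ideal.span {x})},
    localEssentialDVRs (localizationInField K p.asIdeal) K

variable {x : A}

theorem valuation_lt_one_of_mem_essentialDVRs {V : ValuationSubring K}
    (hV : V ∈ essentialDVRs K x) : V.valuation (algebraMap A K x) < 1 := by
  obtain ⟨p, hp, hV⟩ := Set.mem_iUnion₂.1 hV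
  exact valuation_lt_one_of_mem_localEssentialDVRs hV
    (algebraMap_mem_maximalIdeal_localizationInField_iff.2
      (mem_of_mem_associatedPrimes_quotient_span_singleton hp))

variable [IsNoetherianRing A]

theorem finite_essentialDVRs (hx0 : x ≠ 0) : (essentialDVRs K x).Finite := by
  refine Set.Finite.biUnion ?_ fun p hp ↦ ?_
  · exact (associatedPrimes.finite A (A ⧸ Ideal.span {x})).preimage
      (fun p _ q _ ↦ PrimeSpectrum.ext)
  · refine finite_localEssentialDVRs (algebraMap_mem_maximalIdeal_localizationInField_iff.2
      (mem_of_mem_associatedPrimes_quotient_span_singleton hp)) ?_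
    simpa using hx0

theorem isEssentialDVR_of_mem_essentialDVRs (hx0 : x ≠ 0) {V : ValuationSubring K}
    (hV : V ∈ essentialDVRs K x) : IsEssentialDVR A V := by
  obtain ⟨p, hp, hV⟩ := Set.mem_iUnion₂.1 hV
  refine .of_localizationInField (localEssentialDVRs_isEssentialDVR hV
    (algebraMap_mem_maximalIdeal_localizationInField_iff.2
      (mem_of_mem_associatedPrimes_quotient_span_singleton hp)) (by simpa using hx0))

theorem isIntegral_of_forall_mem_essentialDVRs (hx0 : x ≠ 0) {s : K} (hxs : IsIntegral A (x • s))
    (h : ∀ V ∈ essentialDVRs K x, s ∈ V) : IsIntegral A s := by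
  by_contra hs
  obtain ⟨a, p, hp, hpa⟩ := exists_isPrime_colon_singleton_smul
    (N := Subalgebra.toSubmodule (integralClosure A K)) hs
  have hxp : x ∈ p := (hpa x).2 (by rw [smul_comm]; exact hxs.smul a)
  have hasO : ¬ IsIntegral (localizationInField K p) (a • s) := fun hint ↦ by
    obtain ⟨t, ht, hts⟩ := exists_isIntegral_smul_of_isIntegral_localizationInField hint
    exact ht ((hpa t).2 hts)
  have hmas (y) (hy : y ∈ maximalIdeal (localizationInField K p)) :
      IsIntegral (localizationInField K p) (y • a • s) := by
    rw [← IsLocalization.AtPrime.map_eq_maximalIdeal p] at hy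
    induction hy using Submodule.span_induction with
    | mem _ hy =>
      obtain ⟨r, hr, rfl⟩ := hy
      rw [algebraMap_smul]
      exact IsIntegral.tower_top ((hpa r).1 hr)
    | zero => rw [zero_smul]; exact isIntegral_zero
    | add _ _ _ _ h h' => rw [add_smul]; exact h.add h'
    | smul o _ _ h => rw [smul_eq_mul, mul_smul]; exact h.smul o
  have hpass : p ∈ associatedPrimes A (A ⧸ Ideal.span {x}) := by
    obtain ⟨g, hg, hgO⟩ := exists_mem_globalTransform_notMem_one hmas hasO
    refine mem_associatedPrimes_of_not_globalTransform_le hg (fun h ↦ hgO ?_) hxp hx0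
    exact Submodule.mem_one.2 ⟨⟨g, h⟩, rfl⟩
  refine hasO (isIntegral_of_forall_mem_localEssentialDVRs hmas fun V hV ↦ ?_)
  have hVx : V ∈ essentialDVRs K x := Set.mem_iUnion₂.2 ⟨⟨p, hp⟩, hpass, hV⟩
  rw [Algebra.smul_def]
  exact mul_mem ((isEssentialDVR_of_mem_essentialDVRs hx0 hVx).algebraMap_mem a) (h V hVx)

end GlobalEssentialDVR

/-! ### Finiteness of the integral closure modulo an element -/

section FiniteQuotient

variable {R M P : Type*} [CommRing R] [IsNoetherianRing R] [AddCommGroup M] [Module R M]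
  [AddCommGroup P] [Module R P] [Module.Finite R P]

theorem finite_of_surjective_of_ker_le {Q : Type*} [AddCommGroup Q] [Module R Q] {f : M →ₗ[R] P}
    {g : M →ₗ[R] Q} (hg : Function.Surjective g) (hfg : f.ker ≤ g.ker) : Module.Finite R Q :=
  have : Module.Finite R (M ⧸ f.ker) := .equiv f.quotKerEquivRange.symm
  .of_surjective (f.ker.liftQ g hfg) (Function.Surjective.of_comp (g := Submodule.mkQ _) hg)

theorem finite_quotient_of_ker_le {N N' : Submodule R M} [Module.Finite R (M ⧸ N)]
    (f : N →ₗ[R] P) (hN : N' ≤ N) (hf : f.ker ≤ N'.comap N.subtype) :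
    Module.Finite R (M ⧸ N') := by
  have : Module.Finite R (N ⧸ N'.comap N.subtype) :=
    finite_of_surjective_of_ker_le (f := f) (Submodule.mkQ_surjective _) (by simpa using hf)
  refine .of_exact (f := (N'.comap N.subtype).mapQ N' N.subtype le_rfl)
    (g := N'.mapQ N .id hN) (LinearMap.exact_iff.2 ?_) (Submodule.factor_surjective hN)
  rw [Submodule.range_mapQ, Submodule.range_subtype, Submodule.ker_mapQ, Submodule.comap_id]

end FiniteQuotient

section DiscreteValuation

variable {K : Type*} [Field K] (V : ValuationSubring K) [IsDiscreteValuationRing V]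

theorem exists_forall_exists_valuation_eq_pow :
    ∃ ϖ : K, ϖ ≠ 0 ∧ (∀ y, V.valuation y < 1 ↔ V.valuation y ≤ V.valuation ϖ) ∧
      ∀ y ∈ V, y ≠ 0 → ∃ n : ℕ, V.valuation y = V.valuation ϖ ^ n := by
  obtain ⟨ϖ, hϖ⟩ := IsDiscreteValuationRing.exists_irreducible V
  have hϖ1 : V.valuation ϖ < 1 := (V.valuation_lt_one_iff ϖ).1 hϖ.not_isUnit
  have hpow (y) (hyV : y ∈ V) (hy : y ≠ 0) : ∃ n : ℕ, V.valuation y = V.valuation ϖ ^ n := by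
    obtain ⟨n, u, hu⟩ := IsDiscreteValuationRing.associated_pow_irreducible
      (x := ⟨y, hyV⟩) (by simpa [Subtype.ext_iff] using hy) hϖ
    refine ⟨n, ?_⟩
    rw [← map_pow, ← SubmonoidClass.coe_pow, ← hu]
    simp [V.valuation_unit]
  refine ⟨ϖ, by simpa using hϖ.ne_zero, fun y ↦ ⟨fun hy ↦ ?_, fun hy ↦ hy.trans_lt hϖ1⟩, hpow⟩
  obtain rfl | hy0 := eq_or_ne y 0
  · simp
  obtain ⟨n, hn⟩ := hpow y ((V.valuation_le_one_iff y).1 hy.le) hy0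
  rw [hn] at hy ⊢
  exact pow_le_of_le_one zero_le hϖ1.le (by rintro rfl; simp at hy)

variable {V}

theorem exists_valuation_pow_le {c x : K} (hc : V.valuation c < 1) (hx : x ≠ 0) :
    ∃ n : ℕ, V.valuation (c ^ n) ≤ V.valuation x := by
  by_cases hxV : x ∈ V
  · obtain ⟨ϖ, -, hϖ, hpow⟩ := exists_forall_exists_valuation_eq_pow V
    obtain ⟨n, hn⟩ := hpow x hxV hx
    exact ⟨n, by rw [map_pow, hn]; exact pow_le_pow_left' ((hϖ c).1 hc) n⟩
  · refine ⟨0, ?_⟩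
    rw [pow_zero, map_one]
    exact (not_le.1 (mt (V.valuation_le_one_iff x).1 hxV)).le

end DiscreteValuation

namespace IsEssentialDVR

variable {A : Type u} {K : Type v} [CommRing A] [Field K] [Algebra A K] {V V' : ValuationSubring K}

theorem mem_of_isIntegral (h : IsEssentialDVR A V) {b : K} (hb : IsIntegral A b) : b ∈ V := by
  algebraize [(algebraMap A K).codRestrict V.toSubring h.algebraMap_mem]
  have : IsScalarTower A V K := .of_algebraMap_eq fun _ ↦ rfl
  obtain ⟨v, rfl⟩ := IsIntegrallyClosed.isIntegral_iff.1 (hb.tower_top (A := V))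
  exact v.2

theorem valuation_le_one (h : IsEssentialDVR A V) {b : K} (hb : IsIntegral A b) :
    V.valuation b ≤ 1 :=
  (V.valuation_le_one_iff b).2 (h.mem_of_isIntegral hb)

/-- The center of `V` on the integral closure `B` of `A`: the prime ideal of the elements of `B`
which are not units in `V`. -/
def center (h : IsEssentialDVR A V) : Ideal (integralClosure A K) where
  carrier := {b | V.valuation b < 1}
  zero_mem' := by simp
  add_mem' hb hb' := (V.valuation.map_add_lt hb hb' :)
  smul_mem' c b hb := by
    rw [Set.mem_ofPred_eq, smul_eq_mul, MulMemClass.coe_mul, map_mul]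
    exact mul_lt_one_of_nonneg_of_lt_one_right (h.valuation_le_one c.2) zero_le hb

theorem mem_center {h : IsEssentialDVR A V} {b : integralClosure A K} :
    b ∈ h.center ↔ V.valuation b < 1 :=
  .rfl

/-- The elements of the integral closure of `A` of value at most `γ` at `V`. -/
def valuationLE (h : IsEssentialDVR A V) (γ : V.ValueGroup) :
    Submodule A (integralClosure A K) where
  carrier := {b | V.valuation b ≤ γ}
  zero_mem' := by simp
  add_mem' hb hb' := (V.valuation.map_add_le hb hb' :)
  smul_mem' a b hb := by
    rw [Set.mem_ofPred_eq, Subalgebra.coe_smul, Algebra.smul_def, map_mul]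
    exact mul_le_of_le_one_of_le ((V.valuation_le_one_iff _).2 (h.algebraMap_mem a)) hb

theorem mem_valuationLE {h : IsEssentialDVR A V} {γ : V.ValueGroup} {b : integralClosure A K} :
    b ∈ h.valuationLE γ ↔ V.valuation b ≤ γ :=
  .rfl

theorem exists_isIntegral_valuation_lt_one_of_ne (h : IsEssentialDVR A V)
    (h' : IsEssentialDVR A V') (hne : V ≠ V') :
    ∃ c, IsIntegral A c ∧ V.valuation c = 1 ∧ V'.valuation c < 1 := by
  have := h.isDiscreteValuationRing
  have := h'.isDiscreteValuationRing
  by_contra! hc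
  have hV'V {b : K} (hb : IsIntegral A b) (hb1 : V.valuation b = 1) : V'.valuation b = 1 :=
    (h'.valuation_le_one hb).antisymm (hc b hb hb1)
  refine hne (V.eq_of_le_of_ne_top (fun v hv ↦ ?_) ?_)
  · obtain ⟨t, ht, ht1, htv⟩ := h.exists_isIntegral_mul hv
    have := h'.valuation_le_one htv
    rwa [map_mul, hV'V ht ht1, one_mul, V'.valuation_le_one_iff] at this
  · rintro rfl
    exact IsDiscreteValuationRing.not_isField (⊤ : ValuationSubring K)
      (MulEquiv.isField (Field.toIsField K) (Subring.topEquiv (R := K)).toMulEquiv)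

theorem exists_isIntegral_forall_valuation_le (h : IsEssentialDVR A V)
    {F : Set (ValuationSubring K)} (hF : F.Finite) (hF' : ∀ V' ∈ F, IsEssentialDVR A V')
    {x : K} (hx : x ≠ 0) : ∃ c, IsIntegral A c ∧ V.valuation c = 1 ∧
      ∀ V' ∈ F, V' ≠ V → V'.valuation c ≤ V'.valuation x := by
  classical
  have hpow (V') (hV' : V' ∈ F \ {V}) :
      ∃ c, IsIntegral A c ∧ V.valuation c = 1 ∧ V'.valuation c ≤ V'.valuation x := by
    obtain ⟨c, hc, hc1, hcV'⟩ :=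
      h.exists_isIntegral_valuation_lt_one_of_ne (hF' V' hV'.1) (Ne.symm hV'.2)
    have := (hF' V' hV'.1).isDiscreteValuationRing
    obtain ⟨n, hn⟩ := exists_valuation_pow_le hcV' hx
    exact ⟨c ^ n, hc.pow n, by rw [map_pow, hc1, one_pow], hn⟩
  choose! f hf hf1 hfx using hpow
  have hfin : (F \ {V}).Finite := hF.sdiff
  refine ⟨∏ V' ∈ hfin.toFinset, f V', IsIntegral.prod _ (by simpa using hf), ?_,
    fun V' hV' hne ↦ ?_⟩
  · rw [map_prod]
    exact Finset.prod_eq_one (by simpa using hf1)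
  · have hV'F : V' ∈ hfin.toFinset := by simpa using ⟨hV', hne⟩
    rw [← Finset.mul_prod_erase _ _ hV'F, map_mul, map_prod]
    refine mul_le_of_le_of_le_one (hfx V' ⟨hV', hne⟩) (Finset.prod_le_one' fun W hW ↦ ?_)
    exact (hF' V' hV').valuation_le_one (hf W (by simpa using Finset.mem_of_mem_erase hW))

theorem exists_isIntegral_forall_exists_valuation_eq_pow (h : IsEssentialDVR A V) :
    ∃ ϖ : K, IsIntegral A ϖ ∧ ϖ ≠ 0 ∧
      (∀ y, V.valuation y < 1 ↔ V.valuation y ≤ V.valuation ϖ) ∧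
        ∀ y ∈ V, y ≠ 0 → ∃ n : ℕ, V.valuation y = V.valuation ϖ ^ n := by
  have := h.isDiscreteValuationRing
  obtain ⟨ϖ, hϖ0, hϖ, hpow⟩ := exists_forall_exists_valuation_eq_pow V
  obtain ⟨t, -, ht1, htϖ⟩ :=
    h.exists_isIntegral_mul ((V.valuation_le_one_iff ϖ).1 ((hϖ ϖ).2 le_rfl).le)
  refine ⟨t * ϖ, htϖ, mul_ne_zero (by rintro rfl; simp at ht1) hϖ0, ?_⟩
  rw [map_mul, ht1, one_mul]
  exact ⟨hϖ, hpow⟩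

theorem finite_quotient_valuationLE_of_mul [IsNoetherianRing A] (h : IsEssentialDVR A V)
    {γ γ' : V.ValueGroup} (hγ : γ' ≤ γ) {z : K}
    (hz : ∀ b, IsIntegral A b → V.valuation b ≤ γ → IsIntegral A (z * b))
    (hz' : ∀ b, V.valuation (z * b) < 1 → V.valuation b ≤ γ')
    [Module.Finite A (integralClosure A K ⧸ h.center)]
    [Module.Finite A (integralClosure A K ⧸ h.valuationLE γ)] :
    Module.Finite A (integralClosure A K ⧸ h.valuationLE γ') := by
  let mulZ : h.valuationLE γ →ₗ[A] integralClosure A K :=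
    { toFun b := ⟨z * b, hz b b.1.2 b.2⟩
      map_add' b b' := Subtype.ext (mul_add z _ _)
      map_smul' a b := Subtype.ext (mul_smul_comm a z _) }
  refine finite_quotient_of_ker_le ((Ideal.Quotient.mkₐ A h.center).toLinearMap ∘ₗ mulZ)
    (fun b hb ↦ mem_valuationLE.2 ((mem_valuationLE.1 hb).trans hγ)) fun b hb ↦ ?_
  exact hz' _ (mem_center.1 (Ideal.Quotient.eq_zero_iff_mem.1 (LinearMap.mem_ker.1 hb)))

end IsEssentialDVR

section FiniteQuotientSpanSingleton

variable {A : Type u} {K : Type v} [CommRing A] [IsDomain A] [IsNoetherianRing A] [Field K]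
  [Algebra A K] [IsFractionRing A K] {x : A}

open IsEssentialDVR

theorem exists_valuation_mul_eq_forall_isIntegral_mul (hx0 : x ≠ 0) {V : ValuationSubring K}
    (h : IsEssentialDVR A V) {y : K} (hy : IsIntegral A y) :
    ∃ z, V.valuation z * V.valuation (algebraMap A K x) = V.valuation y ∧
      ∀ b, IsIntegral A b → V.valuation (z * b) ≤ 1 → IsIntegral A (z * b) := by
  have hxK : algebraMap A K x ≠ 0 := by simpa using hx0
  obtain ⟨c, hc, hc1, hcx⟩ := h.exists_isIntegral_forall_valuation_le (finite_essentialDVRs hx0)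
    (fun V' hV' ↦ isEssentialDVR_of_mem_essentialDVRs hx0 hV') hxK
  refine ⟨c / algebraMap A K x * y, ?_, fun b hb hzb ↦ ?_⟩
  · rw [← map_mul, mul_right_comm, div_mul_cancel₀ _ hxK, map_mul, hc1, one_mul]
  · refine isIntegral_of_forall_mem_essentialDVRs hx0 ?_ fun V' hV' ↦ ?_
    · rw [Algebra.smul_def, ← mul_assoc, ← mul_assoc, mul_div_cancel₀ _ hxK]
      exact (hc.mul hy).mul hb
    · rw [← V'.valuation_le_one_iff]
      obtain rfl | hne := eq_or_ne V' V
      · exact hzb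
      · rw [mul_assoc, map_mul, map_div₀]
        exact mul_le_one' (div_le_one_of_le₀ (hcx V' hV' hne) zero_le)
          ((isEssentialDVR_of_mem_essentialDVRs hx0 hV').valuation_le_one (hy.mul hb))

theorem finite_quotient_valuationLE (hx0 : x ≠ 0) {V : ValuationSubring K}
    (h : IsEssentialDVR A V) [Module.Finite A (integralClosure A K ⧸ h.center)] :
    Module.Finite A (integralClosure A K ⧸ h.valuationLE (V.valuation (algebraMap A K x))) := by
  have hxK : algebraMap A K x ≠ 0 := by simpa using hx0
  obtain ⟨ϖ, hϖint, hϖ0, hϖ, hpow⟩ := h.exists_isIntegral_forall_exists_valuation_eq_pow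
  replace hϖ0 : V.valuation ϖ ≠ 0 := by simpa using hϖ0
  obtain ⟨e, he⟩ := hpow _ (h.algebraMap_mem x) hxK
  suffices ∀ j ≤ e, Module.Finite A (integralClosure A K ⧸ h.valuationLE (V.valuation ϖ ^ j)) from
    he ▸ this e le_rfl
  intro j hj
  induction j with
  | zero =>
    have htop : h.valuationLE (V.valuation ϖ ^ 0) = ⊤ :=
      eq_top_iff.2 fun b _ ↦ mem_valuationLE.2 (by rw [pow_zero]; exact h.valuation_le_one b.2)
    rw [htop]
    infer_instance
  | succ j ih =>
    have := ih (by lia)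
    obtain ⟨z, hz, hzint⟩ :=
      exists_valuation_mul_eq_forall_isIntegral_mul hx0 h (hϖint.pow (e - j))
    have hzb (b : K) : V.valuation b = V.valuation (z * b) * V.valuation ϖ ^ j := by
      rw [he, map_pow, ← pow_sub_mul_pow _ (by lia : j ≤ e), mul_left_comm,
        mul_eq_left₀ (pow_ne_zero _ hϖ0)] at hz
      rw [map_mul, mul_right_comm, hz, one_mul]
    refine h.finite_quotient_valuationLE_of_mul (z := z)
      (pow_le_pow_right_of_le_one' ((hϖ ϖ).2 le_rfl).le j.le_succ)
      (fun b hb hbj ↦ hzint b hb ?_) (fun b hb ↦ ?_)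
    · rw [hzb] at hbj
      exact le_of_mul_le_mul_right (by rwa [one_mul]) (zero_lt_iff.2 (pow_ne_zero j hϖ0))
    · rw [hzb, pow_succ']
      exact mul_le_mul_left ((hϖ _).1 hb) _

theorem finite_quotient_span_singleton_of_finite_center (hx0 : x ≠ 0)
    (hfin : ∀ V (hV : V ∈ essentialDVRs K x), Module.Finite A
      (integralClosure A K ⧸ (isEssentialDVR_of_mem_essentialDVRs hx0 hV).center)) :
    Module.Finite A (integralClosure A K ⧸ Ideal.span {algebraMap A (integralClosure A K) x}) := by
  have hxK : algebraMap A K x ≠ 0 := by simpa using hx0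
  have := (finite_essentialDVRs (K := K) hx0).to_subtype
  have hV (V : essentialDVRs K x) : IsEssentialDVR A V.1 :=
    isEssentialDVR_of_mem_essentialDVRs hx0 V.2
  let J (V : essentialDVRs K x) := (hV V).valuationLE (V.1.valuation (algebraMap A K x))
  have hJ (V : essentialDVRs K x) : Module.Finite A (integralClosure A K ⧸ J V) :=
    have := hfin V.1 V.2
    finite_quotient_valuationLE hx0 (hV V)
  let f : integralClosure A K →ₗ[A] Π V, integralClosure A K ⧸ J V :=
    LinearMap.pi fun V ↦ (J V).mkQ
  refine finite_of_surjective_of_ker_le (f := f) (g := (Ideal.Quotient.mkₐ A _).toLinearMap)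
    Ideal.Quotient.mk_surjective fun b hb ↦ ?_
  rw [LinearMap.mem_ker]
  refine Ideal.Quotient.eq_zero_iff_mem.2 ?_
  have hbV (V) (hV : V ∈ essentialDVRs K x) :
      V.valuation b ≤ V.valuation (algebraMap A K x) :=
    mem_valuationLE.1 ((Submodule.Quotient.mk_eq_zero _).1 (congr_fun hb ⟨V, hV⟩))
  have hxb : x • ((b : K) / algebraMap A K x) = b := by rw [Algebra.smul_def]; field
  have hint : IsIntegral A ((b : K) / algebraMap A K x) := by
    refine isIntegral_of_forall_mem_essentialDVRs hx0 (by rw [hxb]; exact b.2) fun V hV ↦ ?_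
    rw [← V.valuation_le_one_iff, map_div₀]
    exact div_le_one_of_le₀ (hbV V hV) zero_le
  refine Ideal.mem_span_singleton'.2 ⟨⟨_, hint⟩, Subtype.ext ?_⟩
  exact div_mul_cancel₀ _ hxK

end FiniteQuotientSpanSingleton

/-! ### Complete local rings are Nagata -/

section AdicallyComplete

variable {R : Type*} [CommRing R] {I : Ideal R}

theorem isPrecomplete_pi {ι : Type*} [Finite ι] [IsPrecomplete I R] :
    IsPrecomplete I (ι → R) := by
  classical
  have := Fintype.ofFinite ι
  have hmem {n : ℕ} {y : ι → R} :
      y ∈ (I ^ n • ⊤ : Submodule R (ι → R)) ↔ ∀ i, y i ∈ (I ^ n • ⊤ : Ideal R) := by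
    refine ⟨fun hy i ↦ ?_, fun hy ↦ ?_⟩
    · have := Submodule.mem_map_of_mem (f := LinearMap.proj i) hy
      rw [Submodule.map_smul''] at this
      exact Submodule.smul_mono le_rfl le_top this
    · rw [pi_eq_sum_univ' y]
      refine sum_mem fun i _ ↦ Submodule.smul_mem_smul ?_ Submodule.mem_top
      simpa using hy i
  refine ⟨fun f hf ↦ ?_⟩
  simp only [SModEq.sub_mem, hmem] at hf ⊢
  choose L hL using fun i ↦ IsPrecomplete.prec (I := I) inferInstance (f := fun n ↦ f n i)
    fun hmn ↦ SModEq.sub_mem.2 (hf hmn i)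
  exact ⟨L, fun n i ↦ SModEq.sub_mem.1 (hL i n)⟩

variable [IsNoetherianRing R] [IsLocalRing R]

theorem isPrecomplete_of_le_maximalIdeal [IsPrecomplete (maximalIdeal R) R]
    (hI : I ≤ maximalIdeal R) : IsPrecomplete I R := by
  refine ⟨fun f hf ↦ ?_⟩
  obtain ⟨L, hL⟩ := IsPrecomplete.prec (I := maximalIdeal R) inferInstance (f := f) fun hmn ↦
    (hf hmn).mono (Submodule.smul_mono_left (Ideal.pow_right_mono hI _))
  refine ⟨L, fun n ↦ SModEq.sub_mem.2 ((Submodule.Quotient.mk_eq_zero _).1 ?_)⟩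
  refine IsHausdorff.haus (I := maximalIdeal R) inferInstance _ fun k ↦ SModEq.zero.2 ?_
  have hfk : f n - f (n + k) ∈ (I ^ n • ⊤ : Ideal R) := SModEq.sub_mem.1 (hf (n.le_add_right k))
  have hkL : f (n + k) - L ∈ (maximalIdeal R ^ k • ⊤ : Ideal R) :=
    SModEq.sub_mem.1 ((hL (n + k)).mono
      (Submodule.smul_mono_left (Ideal.pow_le_pow_right (k.le_add_left n))))
  rw [← sub_add_sub_cancel _ (f (n + k)), Submodule.Quotient.mk_add,
    (Submodule.Quotient.mk_eq_zero _).2 hfk, zero_add]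
  have hmap := Submodule.mem_map_of_mem (f := Submodule.mkQ (I ^ n • ⊤ : Ideal R)) hkL
  rw [Submodule.map_smul''] at hmap
  exact Submodule.smul_mono le_rfl le_top hmap

theorem finite_of_isPrecomplete_of_isHausdorff [IsPrecomplete (maximalIdeal R) R]
    (hI : I ≤ maximalIdeal R) {M : Type*} [AddCommGroup M] [Module R M] [IsHausdorff I M]
    [Module.Finite R (M ⧸ (I • ⊤ : Submodule R M))] : Module.Finite R M := by
  have := isPrecomplete_of_le_maximalIdeal hI
  obtain ⟨n, f, hf⟩ := Module.Finite.exists_fin' R (M ⧸ (I • ⊤ : Submodule R M))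
  obtain ⟨g, hg⟩ := Module.projective_lifting_property _ f (Submodule.mkQ_surjective _)
  have := isPrecomplete_pi (I := I) (ι := Fin n)
  exact .of_surjective g (surjective_of_mkQ_comp_surjective (I := I) (hg ▸ hf))

end AdicallyComplete

section Nagata

/-- `C` is N-1: its integral closure in its field of fractions is a finite `C`-module. The field
of fractions is arbitrary so that it can be chosen inside a given extension of `C`. -/
def IsN1 (C : Type u) [CommRing C] : Prop :=
  ∀ (L : Type u) [Field L] [Algebra C L] [IsFractionRing C L],
    Module.Finite C (integralClosure C L)

/-- Every domain finite over `A` has finite normalization. For Noetherian rings this is the notion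
of a Nagata ring. -/
def IsNagata (A : Type u) [CommRing A] : Prop :=
  ∀ (C : Type u) [CommRing C] [IsDomain C] [Algebra A C] [Module.Finite A C], IsN1 C

variable {C E : Type u} [CommRing C] [CommRing E] [Algebra C E]

theorem isFractionRing_of_forall_exists_smul_mem [IsDomain E] {D : Subalgebra C E}
    (hD : ∀ e : E, ∃ c : C, algebraMap C E c ≠ 0 ∧ c • e ∈ D) :
    IsFractionRing D (FractionRing E) := by
  refine IsFractionRing.of_field _ _ fun z ↦ ?_
  obtain ⟨e, d, -, rfl⟩ := IsFractionRing.div_surjective (A := E) z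
  obtain ⟨c, hc, hce⟩ := hD e
  obtain ⟨c', hc', hcd⟩ := hD d
  refine ⟨⟨c' • c • e, D.smul_mem hce c'⟩, ⟨c • c' • d, D.smul_mem hcd c⟩, ?_⟩
  have hcK : algebraMap E (FractionRing E) (algebraMap C E c) ≠ 0 := by simpa using hc
  have hcK' : algebraMap E (FractionRing E) (algebraMap C E c') ≠ 0 := by simpa using hc'
  simp only [IsScalarTower.algebraMap_apply D E (FractionRing E), Subalgebra.algebraMap_def,
    Algebra.algebraMap_self, RingHom.id_apply, Algebra.smul_def, map_mul]
  rw [mul_left_comm, mul_div_mul_left _ _ hcK, mul_div_mul_left _ _ hcK']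

theorem finite_of_finite_integralClosure_subalgebra [Algebra.IsIntegral C E] (D : Subalgebra C E)
    [IsNoetherianRing D] [Module.Finite C D]
    [Module.Finite D (integralClosure D (FractionRing E))] : Module.Finite C E := by
  have : Algebra.IsIntegral D E := .tower_top C
  have hint (e : E) : IsIntegral D (algebraMap E (FractionRing E) e) :=
    (Algebra.IsIntegral.isIntegral e).algebraMap
  have : Module.Finite D E := by
    refine .of_injective (((IsScalarTower.toAlgHom D E (FractionRing E)).codRestrict
      (integralClosure D (FractionRing E)) hint).toLinearMap) fun e e' h ↦ ?_
    exact IsFractionRing.injective E (FractionRing E) congr($h)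
  exact .trans D E

end Nagata

section CompleteLocal

open IsEssentialDVR

variable {C L : Type u} [CommRing C] [Field L] [Algebra C L]

theorem IsEssentialDVR.isPrime_center {V : ValuationSubring L} (h : IsEssentialDVR C V) :
    h.center.IsPrime := by
  refine Ideal.isPrime_iff.2 ⟨(Ideal.ne_top_iff_one _).2 ?_, fun {b b'} hbb' ↦ ?_⟩
  · simp [mem_center]
  · simp only [mem_center] at hbb' ⊢
    by_contra! hne
    exact hbb'.not_ge (by simpa using one_le_mul hne.1 hne.2)

theorem IsEssentialDVR.exists_finset_smul_mem_span {V : ValuationSubring L}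
    (h : IsEssentialDVR C V) : ∃ S : Finset (integralClosure C L ⧸ h.center), ∀ e, ∃ c : C,
      algebraMap C (integralClosure C L ⧸ h.center) c ≠ 0 ∧
        c • e ∈ Submodule.span C (S : Set (integralClosure C L ⧸ h.center)) := by
  classical
  obtain ⟨S, hS, hSV⟩ := h.exists_finset_isIntegral
  let B := integralClosure C L
  let mkB : B →ₗ[C] B ⧸ h.center := (Ideal.Quotient.mkₐ C h.center).toLinearMap
  have hS' : (B.val.toLinearMap '' (B.val.toLinearMap ⁻¹' S) : Set L) = S :=
    Set.image_preimage_eq_of_subset fun s hs ↦ ⟨⟨s, hS s hs⟩, rfl⟩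
  have hfin : (B.val.toLinearMap ⁻¹' (S : Set L)).Finite :=
    S.finite_toSet.preimage Subtype.val_injective.injOn
  refine ⟨hfin.toFinset.image mkB, Ideal.Quotient.mk_surjective.forall.2 fun b ↦ ?_⟩
  obtain ⟨c, hc, w, hw, hcw⟩ := hSV b (h.mem_of_isIntegral b.2)
  refine ⟨c, fun hc0 ↦ ?_, ?_⟩
  · exact (h.mem_center.1 (Ideal.Quotient.eq_zero_iff_mem.1 hc0)).ne hc
  rw [← hS', Submodule.span_image] at hw
  obtain ⟨w, hw, rfl⟩ := hw
  have hcb : c • Ideal.Quotient.mk h.center b = mkB w :=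
    Ideal.Quotient.eq.2 (h.mem_center.2 hcw)
  rw [hcb, Finset.coe_image, Submodule.span_image, hfin.coe_toFinset]
  exact Submodule.mem_map_of_mem hw

theorem IsEssentialDVR.finite_quotient_center [IsNoetherianRing C] {A : Type u} [CommRing A]
    [Algebra A C] [Module.Finite A C] {V : ValuationSubring L} (h : IsEssentialDVR C V)
    (ih : ∀ (D : Type u) [CommRing D] [IsDomain D] [Algebra A D] [Module.Finite A D],
      RingHom.ker (algebraMap A C) < RingHom.ker (algebraMap A D) → IsN1 D)
    {a : A} (ha0 : algebraMap A C a ≠ 0)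
    (ha : V.valuation (algebraMap C L (algebraMap A C a)) < 1) :
    Module.Finite C (integralClosure C L ⧸ h.center) := by
  have := h.isPrime_center
  let _ : Algebra A L := ((algebraMap C L).comp (algebraMap A C)).toAlgebra
  have : IsScalarTower A C L := .of_algebraMap_eq fun _ ↦ rfl
  obtain ⟨S, hS⟩ := h.exists_finset_smul_mem_span
  let D := Algebra.adjoin C (S : Set (integralClosure C L ⧸ h.center))
  have : Module.Finite C D := Module.Finite.iff_fg.2 (fg_adjoin_of_finite S.finite_toSet
    fun e _ ↦ Algebra.IsIntegral.isIntegral e)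
  have : Module.Finite A D := .trans C D
  have : IsNoetherianRing D := .of_finite C D
  have : IsFractionRing D (FractionRing (integralClosure C L ⧸ h.center)) :=
    isFractionRing_of_forall_exists_smul_mem fun e ↦
      (hS e).imp fun c hc ↦ ⟨hc.1, Algebra.span_le_adjoin C _ hc.2⟩
  have hker : RingHom.ker (algebraMap A C) < RingHom.ker (algebraMap A D) := by
    refine ⟨fun r hr ↦ ?_, fun hle ↦ ha0 (hle (RingHom.mem_ker.2 (Subtype.ext ?_)))⟩
    · rw [RingHom.mem_ker] at hr ⊢
      rw [IsScalarTower.algebraMap_apply A C D, hr, map_zero]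
    · exact Ideal.Quotient.eq_zero_iff_mem.2 (h.mem_center.2 ha)
  have := ih D hker (FractionRing (integralClosure C L ⧸ h.center))
  exact finite_of_finite_integralClosure_subalgebra D

variable [IsDomain C]

theorem isN1_of_isField (hC : IsField C) : IsN1 C := by
  intro L _ _ _
  refine .of_surjective (Algebra.linearMap C (integralClosure C L)) fun b ↦ ?_
  obtain ⟨c, hc⟩ := (IsFractionRing.surjective_iff_isField (K := L)).2 hC b
  exact ⟨c, Subtype.ext hc⟩

section PowSMul

variable [IsNoetherianRing C] [IsFractionRing C L] {x : C}

theorem nonempty_essentialDVRs (hx0 : x ≠ 0) (hx : ¬IsUnit x) : (essentialDVRs L x).Nonempty := by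
  by_contra! hempty
  have hxL : algebraMap C L x ≠ 0 := by simpa using hx0
  have hint : IsIntegral C (algebraMap C L x)⁻¹ := by
    refine isIntegral_of_forall_mem_essentialDVRs hx0 ?_ (by simp [hempty])
    rw [Algebra.smul_def, mul_inv_cancel₀ hxL]
    exact isIntegral_one
  have hu : IsUnit (algebraMap C (integralClosure C L) x) :=
    .of_mul_eq_one ⟨_, hint⟩ (Subtype.ext (mul_inv_cancel₀ hxL))
  have := Algebra.IsIntegral.isLocalHom C (integralClosure C L)
  exact hx (hu.of_map)

theorem eq_zero_of_forall_exists_pow_smul_eq (hx0 : x ≠ 0) (hx : ¬IsUnit x)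
    {b : integralClosure C L} (hb : ∀ n : ℕ, ∃ b', x ^ n • b' = b) : b = 0 := by
  obtain ⟨V, hV⟩ := nonempty_essentialDVRs (L := L) hx0 hx
  have h := isEssentialDVR_of_mem_essentialDVRs hx0 hV
  have := h.isDiscreteValuationRing
  by_contra hb0
  obtain ⟨n, hn⟩ := exists_valuation_pow_le (valuation_lt_one_of_mem_essentialDVRs hV)
    (x := (b : L)) (by simpa using hb0)
  obtain ⟨b', rfl⟩ := hb (n + 1)
  have hxV : V.valuation (algebraMap C L x) ≠ 0 := by simpa using hx0
  have hlt : V.valuation (algebraMap C L x ^ (n + 1)) < V.valuation (algebraMap C L x ^ n) := by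
    rw [map_pow, map_pow]
    exact pow_lt_pow_right_of_lt_one₀ (zero_lt_iff.2 hxV)
      (valuation_lt_one_of_mem_essentialDVRs hV) n.lt_succ_self
  refine (hlt.trans_le hn).not_ge ?_
  rw [Subalgebra.coe_smul, Algebra.smul_def, map_pow, map_mul]
  exact mul_le_of_le_one_right' (h.valuation_le_one b'.2)

end PowSMul

section IntegralOverLocal

variable {A : Type*} [CommRing A] [IsLocalRing A] [Algebra A C] [Algebra.IsIntegral A C]

theorem isField_of_maximalIdeal_le_ker (hm : maximalIdeal A ≤ RingHom.ker (algebraMap A C)) :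
    IsField C := by
  have hmax : (RingHom.ker (algebraMap A C)).IsMaximal := by
    rw [(le_maximalIdeal (RingHom.ker_ne_top (algebraMap A C))).antisymm hm]
    exact maximalIdeal.isMaximal A
  exact Ring.isField_iff_maximal_bot.2 (Ideal.isMaximal_of_isIntegral_of_isMaximal_comap ⊥ hmax)

theorem not_isUnit_algebraMap_of_mem_maximalIdeal {a : A} (ha : a ∈ maximalIdeal A) :
    ¬IsUnit (algebraMap A C a) := by
  obtain ⟨M, hM⟩ := Ideal.exists_maximal C
  have := eq_maximalIdeal (Ideal.isMaximal_comap_of_isIntegral_of_isMaximal (R := A) M)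
  exact fun hu ↦ hM.ne_top (M.eq_top_of_isUnit_mem (this.ge ha) hu)

end IntegralOverLocal

theorem isN1_of_isPrecomplete {A : Type u} [CommRing A] [IsLocalRing A] [IsNoetherianRing A]
    [IsPrecomplete (maximalIdeal A) A] [Algebra A C] [Module.Finite A C]
    (ih : ∀ (D : Type u) [CommRing D] [IsDomain D] [Algebra A D] [Module.Finite A D],
      RingHom.ker (algebraMap A C) < RingHom.ker (algebraMap A D) → IsN1 D) :
    IsN1 C := by
  have : IsNoetherianRing C := .of_finite A C
  by_cases hm : maximalIdeal A ≤ RingHom.ker (algebraMap A C)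
  · exact isN1_of_isField (isField_of_maximalIdeal_le_ker hm)
  obtain ⟨a, ham, ha0⟩ := SetLike.not_le_iff_exists.1 hm
  rw [RingHom.mem_ker] at ha0
  intro L _ _ _
  let _ : Algebra A L := ((algebraMap C L).comp (algebraMap A C)).toAlgebra
  have : IsScalarTower A C L := .of_algebraMap_eq fun _ ↦ rfl
  let B := integralClosure C L
  have := finite_quotient_span_singleton_of_finite_center (K := L) ha0 fun V hV ↦
    (isEssentialDVR_of_mem_essentialDVRs ha0 hV).finite_quotient_center ih ha0
      (valuation_lt_one_of_mem_essentialDVRs hV)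
  have : Module.Finite A (B ⧸ Ideal.span {algebraMap C B (algebraMap A C a)}) := .trans C _
  have hsmul {n : ℕ} {b : B} : b ∈ (Ideal.span {a} ^ n • ⊤ : Submodule A B) ↔
      ∃ b', a ^ n • b' = b := by
    simp only [Ideal.span_singleton_pow, Submodule.ideal_span_singleton_smul,
      Submodule.mem_smul_pointwise_iff_exists, Submodule.mem_top, true_and]
  have : Module.Finite A (B ⧸ (Ideal.span {a} • ⊤ : Submodule A B)) := by
    refine finite_of_surjective_of_ker_le (Submodule.mkQ_surjective _)
      (f := (Ideal.Quotient.mkₐ A (Ideal.span {algebraMap C B (algebraMap A C a)})).toLinearMap)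
      fun b hb ↦ ?_
    obtain ⟨b', rfl⟩ := Ideal.mem_span_singleton'.1 (Ideal.Quotient.eq_zero_iff_mem.1 hb)
    rw [Submodule.ker_mkQ, ← pow_one (Ideal.span {a}), hsmul]
    exact ⟨b', by rw [pow_one, mul_comm, ← Algebra.smul_def, algebraMap_smul]⟩
  have : IsHausdorff (Ideal.span {a}) B := by
    refine ⟨fun b hb ↦ eq_zero_of_forall_exists_pow_smul_eq ha0
      (not_isUnit_algebraMap_of_mem_maximalIdeal ham) fun n ↦ ?_⟩
    obtain ⟨b', hb'⟩ := hsmul.1 (SModEq.zero.1 (hb n))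
    exact ⟨b', by rw [← map_pow, algebraMap_smul, hb']⟩
  have : Module.Finite A B :=
    finite_of_isPrecomplete_of_isHausdorff ((Ideal.span_singleton_le_iff_mem _).2 ham)
  exact .of_restrictScalars_finite A C B

theorem isNagata_of_isPrecomplete (A : Type u) [CommRing A] [IsLocalRing A] [IsNoetherianRing A]
    [IsPrecomplete (maximalIdeal A) A] : IsNagata A := by
  suffices ∀ (I : Ideal A) (C : Type u) [CommRing C] [IsDomain C] [Algebra A C]
    [Module.Finite A C], RingHom.ker (algebraMap A C) = I → IsN1 C from fun C ↦ this _ C rfl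
  intro I
  induction I using IsNoetherian.induction with | hgt I ih =>
  rintro C _ _ _ _ rfl
  exact isN1_of_isPrecomplete fun D _ _ _ _ hlt ↦ ih _ hlt D rfl

end CompleteLocal

/-! ### Descent from the completion -/

section NoetherianCompletion

theorem isNoetherianRing_of_isAdicComplete {R S : Type*} [CommRing R] [IsNoetherianRing R]
    [CommRing S] (φ : R →+* S) {I : Ideal S} (hI : I.FG) [IsAdicComplete I S]
    (hφ : Function.Surjective ((Ideal.Quotient.mk I).comp φ)) : IsNoetherianRing S := by
  obtain ⟨n, a, ha⟩ := Submodule.fg_iff_exists_fin_generating_family.1 hI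
  let _ : UniformSpace R := ⊥
  have : DiscreteUniformity R := ⟨rfl⟩
  let _ : TopologicalSpace S := I.adicTopology
  have hadic : IsAdic I := rfl
  have : IsTopologicalRing S := I.ringFilterBasis.isTopologicalRing
  let _ : UniformSpace S := IsTopologicalAddGroup.rightUniformSpace S
  have : IsUniformAddGroup S := isUniformAddGroup_of_addCommGroup
  obtain ⟨_, _⟩ := hadic.isAdicComplete_iff.1 inferInstance
  have : IsLinearTopology S S := I.isLinearTopology
  have haI (i) : a i ∈ I := ha ▸ Submodule.subset_span ⟨i, rfl⟩
  have hev : MvPowerSeries.HasEval a := by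
    refine ⟨fun i ↦ (hadic.hasBasis_nhds_zero.tendsto_right_iff).2 fun k _ ↦ ?_, ?_⟩
    · filter_upwards [Filter.eventually_ge_atTop k] with m hm
      exact Ideal.pow_le_pow_right hm (Ideal.pow_mem_pow (haI i) m)
    · rw [Filter.cofinite_eq_bot]
      exact Filter.tendsto_bot
  let f : MvPowerSeries (Fin n) R →+* S :=
    MvPowerSeries.eval₂Hom (φ := φ) continuous_of_discreteTopology hev
  have hmap : (Ideal.span (Set.range (MvPowerSeries.X (R := R)))).map f = I := by
    have hfX : f ∘ MvPowerSeries.X = a := funext fun i ↦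
      (congrFun (MvPowerSeries.coe_eval₂Hom _ _) _).trans (MvPowerSeries.eval₂_X ..)
    rw [Ideal.map_span, ← Set.range_comp, hfX]
    exact ha
  have : IsHausdorff ((Ideal.span (Set.range (MvPowerSeries.X (R := R)))).map f) S := by
    rw [hmap]
    infer_instance
  refine isNoetherianRing_of_surjective _ _ f
    (surjective_of_mk_map_comp_surjective (I := Ideal.span (Set.range MvPowerSeries.X)) f ?_)
  rw [hmap]
  refine fun y ↦ (hφ y).elim fun r hr ↦ ⟨MvPowerSeries.C r, ?_⟩
  have hfC : f (MvPowerSeries.C r) = φ r :=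
    (congrFun (MvPowerSeries.coe_eval₂Hom _ _) _).trans (MvPowerSeries.eval₂_C ..)
  rw [RingHom.comp_apply, hfC, ← hr, RingHom.comp_apply]

variable (R : Type*) [CommRing R] [IsLocalRing R] [IsNoetherianRing R]

theorem isNoetherianRing_adicCompletion_maximalIdeal :
    IsNoetherianRing (AdicCompletion (maximalIdeal R) R) := by
  refine isNoetherianRing_of_isAdicComplete (I := maximalIdeal _)
    (algebraMap R (AdicCompletion (maximalIdeal R) R)) ?_ fun y ↦ ?_
  · rw [AdicCompletion.maximalIdeal_eq_map]
    exact Ideal.FG.map (IsNoetherian.noetherian _) _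
  · obtain ⟨z, hz⟩ := (AdicCompletion.residueField_map_bijective R).2 y
    obtain ⟨r, rfl⟩ := residue_surjective z
    exact ⟨r, hz⟩

theorem faithfullyFlat_adicCompletion_maximalIdeal :
    Module.FaithfullyFlat R (AdicCompletion (maximalIdeal R) R) := by
  have := AdicCompletion.flat_of_isNoetherian (maximalIdeal R)
  exact .of_flat_of_isLocalHom

end NoetherianCompletion

section Descent

open TensorProduct

variable {R A Q W : Type*} [CommRing R] [CommRing A] [Algebra R A] [CommRing Q] [Algebra R Q]
  [IsFractionRing R Q] [CommRing W] [Algebra R W] [Algebra A W] [IsScalarTower R A W]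

theorem injective_productLeftAlgHom_of_isFractionRing
    (hAW : Function.Injective (algebraMap A W)) (ψ : Q →ₐ[R] W) :
    Function.Injective (Algebra.TensorProduct.productLeftAlgHom (Algebra.ofId A W) ψ) := by
  let _ : Algebra Q (A ⊗[R] Q) := Algebra.TensorProduct.rightAlgebra
  have : IsLocalization (Algebra.algebraMapSubmonoid A (nonZeroDivisors R)) (A ⊗[R] Q) :=
    (Algebra.isLocalization_iff_isPushout (nonZeroDivisors R) Q).2 inferInstance
  refine (IsLocalization.injective_iff_map_algebraMap_eq
    (Algebra.algebraMapSubmonoid A (nonZeroDivisors R))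
    (Algebra.TensorProduct.productLeftAlgHom (Algebra.ofId A W) ψ).toRingHom).2
    fun a b ↦ ⟨fun h ↦ congrArg _ h, fun h ↦ ?_⟩
  have hab : algebraMap A W a = algebraMap A W b := by simpa [Algebra.ofId_apply] using h
  rw [hAW hab]

theorem finite_integralClosure_of_faithfullyFlat [Module.FaithfullyFlat R A] [IsNoetherianRing A]
    (hAW : Function.Injective (algebraMap A W)) (ψ : Q →ₐ[R] W)
    [Module.Finite A (integralClosure A W)] : Module.Finite R (integralClosure R Q) := by
  let toW : A ⊗[R] integralClosure R Q →ₐ[A] W :=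
    (Algebra.TensorProduct.productLeftAlgHom (Algebra.ofId A W) ψ).comp
      (Algebra.TensorProduct.map (.id A A) (integralClosure R Q).val)
  have hinj : Function.Injective toW := (injective_productLeftAlgHom_of_isFractionRing hAW ψ).comp
    (Module.Flat.lTensor_preserves_injective_linearMap (integralClosure R Q).val.toLinearMap
      Subtype.val_injective)
  have : Module.Finite A (A ⊗[R] integralClosure R Q) :=
    .of_injective (toW.codRestrict (integralClosure A W) fun t ↦
      (Algebra.IsIntegral.isIntegral t).map toW).toLinearMap
      fun t t' h ↦ hinj congr(($h : W))
  exact .of_finite_tensorProduct_of_faithfullyFlat A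

end Descent

section AnalyticallyUnramified

variable {A : Type u} [CommRing A] [IsNoetherianRing A]

theorem finite_integralClosure_pi {ι : Type*} [Finite ι] (K : ι → Type*) [∀ i, CommRing (K i)]
    [∀ i, Algebra A (K i)] [∀ i, Module.Finite A (integralClosure A (K i))] :
    Module.Finite A (integralClosure A (∀ i, K i)) := by
  let proj (i : ι) : integralClosure A (∀ i, K i) →ₐ[A] integralClosure A (K i) :=
    ((Pi.evalAlgHom A K i).comp (integralClosure A (∀ i, K i)).val).codRestrict _
      fun b ↦ b.2.map (Pi.evalAlgHom A K i)
  refine .of_injective (LinearMap.pi fun i ↦ (proj i).toLinearMap) fun b b' h ↦ ?_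
  exact Subtype.ext (funext fun i ↦ congrArg Subtype.val (congrFun h i))

theorem IsNagata.finite_integralClosure_fractionRing_quotient (hA : IsNagata A) (P : Ideal A)
    [P.IsPrime] : Module.Finite A (integralClosure A (FractionRing (A ⧸ P))) := by
  have := hA (A ⧸ P) (FractionRing (A ⧸ P))
  have hfin : Module.Finite A (integralClosure (A ⧸ P) (FractionRing (A ⧸ P))) := .trans (A ⧸ P) _
  have : Module.Finite A ((integralClosure (A ⧸ P) (FractionRing (A ⧸ P))).restrictScalars A) :=
    hfin
  refine .of_injective (((integralClosure A (FractionRing (A ⧸ P))).val.codRestrict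
    ((integralClosure (A ⧸ P) (FractionRing (A ⧸ P))).restrictScalars A)
    fun b ↦ b.2.tower_top).toLinearMap) fun b b' h ↦ ?_
  exact Subtype.ext congr(($h : FractionRing (A ⧸ P)))

theorem IsNagata.finite_integralClosure_of_faithfullyFlat [IsReduced A] (hA : IsNagata A)
    {R : Type*} (Q : Type*) [CommRing R] [CommRing Q] [Algebra R A] [Module.FaithfullyFlat R A]
    [Algebra R Q] [IsFractionRing R Q] : Module.Finite R (integralClosure R Q) := by
  have := (minimalPrimes.finite_of_isNoetherianRing A).to_subtype
  have (P : minimalPrimes A) : P.1.IsPrime := P.2.1.1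
  have (P : minimalPrimes A) := hA.finite_integralClosure_fractionRing_quotient P.1
  let W := ∀ P : minimalPrimes A, FractionRing (A ⧸ P.1)
  have : Module.Finite A (integralClosure A W) := finite_integralClosure_pi _
  have hzero (a : A) (P : minimalPrimes A) :
      algebraMap A (FractionRing (A ⧸ P.1)) a = 0 ↔ a ∈ P.1 := by
    rw [IsScalarTower.algebraMap_apply A (A ⧸ P.1), FaithfulSMul.algebraMap_eq_zero_iff]
    exact Ideal.Quotient.eq_zero_iff_mem
  have hinj : Function.Injective (algebraMap A W) := by
    refine (injective_iff_map_eq_zero _).2 fun a ha ↦ ?_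
    have hmem : a ∈ sInf (minimalPrimes A) :=
      Ideal.mem_sInf.2 fun {P} hP ↦ (hzero a ⟨P, hP⟩).1 (congrFun ha ⟨P, hP⟩)
    rw [minimalPrimes, Ideal.sInf_minimalPrimes] at hmem
    exact (mem_nilradical.1 hmem).eq_zero
  have hunit (r : nonZeroDivisors R) : IsUnit (algebraMap R W r) := by
    refine Pi.isUnit_iff.2 fun P ↦ isUnit_iff_ne_zero.2 fun h0 ↦ ?_
    have hr : algebraMap R A r ∈ nonZeroDivisors A := by
      have hreg := Module.Flat.isSMulRegular_of_nonZeroDivisors (M := A) r.2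
      rw [← isSMulRegular_algebraMap_iff (A := A)] at hreg
      rwa [← isRegular_iff_mem_nonZeroDivisors, ← isLeftRegular_iff_isRegular]
    exact (Ideal.disjoint_nonZeroDivisors_of_mem_minimalPrimes P.2).le_bot ⟨(hzero _ P).1 h0, hr⟩
  exact _root_.finite_integralClosure_of_faithfullyFlat hinj
    (IsLocalization.liftAlgHom (M := nonZeroDivisors R) (S := Q) (f := Algebra.ofId R W) hunit)

theorem isReduced_of_isReduced_adicCompletion (R : Type u) [CommRing R] [IsLocalRing R]
    [IsNoetherianRing R] [IsReduced (AdicCompletion (maximalIdeal R) R)] : IsReduced R :=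
  have := faithfullyFlat_adicCompletion_maximalIdeal R
  isReduced_of_injective (algebraMap R (AdicCompletion (maximalIdeal R) R))
    (FaithfulSMul.algebraMap_injective _ _)

theorem finite_integralClosure_of_isReduced_adicCompletion (R : Type u) [CommRing R] [IsLocalRing R]
    [IsNoetherianRing R] [IsReduced (AdicCompletion (maximalIdeal R) R)] (Q : Type*) [CommRing Q]
    [Algebra R Q] [IsFractionRing R Q] : Module.Finite R (integralClosure R Q) := by
  have := isNoetherianRing_adicCompletion_maximalIdeal R
  have := faithfullyFlat_adicCompletion_maximalIdeal R
  exact (isNagata_of_isPrecomplete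
    (AdicCompletion (maximalIdeal R) R)).finite_integralClosure_of_faithfullyFlat Q

end AnalyticallyUnramified

/-! ### Vanishing of Ext and localization -/

section ExtVanishing

variable {R : Type u} [CommRing R]

/-- `Ext^n_R(M, N) = 0`, for the `Ext`-groups defined by the derived category, which come with
long exact sequences in both variables. -/
def ExtVanishes (R : Type u) [CommRing R] (M N : Type u) [AddCommGroup M] [Module R M]
    [AddCommGroup N] [Module R N] (n : ℕ) : Prop :=
  Subsingleton (Abelian.Ext (ModuleCat.of R M) (ModuleCat.of R N) n)

theorem subsingleton_abelianExt_succ_of_subsingleton_ext {X Y : ModuleCat.{u} R} {n : ℕ}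
    (h : Subsingleton (((Ext R (ModuleCat.{u} R) (n + 1)).obj (Opposite.op X)).obj Y)) :
    Subsingleton (Abelian.Ext X Y (n + 1)) := by
  let P := projectiveResolution X
  have hexact : (P.complex.linearYonedaObj R Y).ExactAt (n + 1) := by
    rw [HomologicalComplex.exactAt_iff_isZero_homology]
    exact (ModuleCat.isZero_of_subsingleton _).of_iso (P.isoExt (n + 1) Y).symm
  rw [HomologicalComplex.exactAt_iff' _ n (n + 1) (n + 2) (by simp) (by simp),
    ShortComplex.moduleCat_exact_iff] at hexact
  refine subsingleton_of_forall_eq 0 fun α => ?_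
  obtain ⟨f, hf, rfl⟩ := P.extMk_surjective α (n + 2) rfl
  obtain ⟨g, hg⟩ := hexact f hf
  exact (P.extMk_eq_zero_iff f (n + 2) rfl hf n rfl).mpr ⟨g, hg⟩

variable {M N : Type u} [AddCommGroup M] [Module R M] [AddCommGroup N] [Module R N]

theorem ExtVanishes.of_linearEquiv {M' N' : Type u} [AddCommGroup M'] [Module R M']
    [AddCommGroup N'] [Module R N'] {n : ℕ} (h : ExtVanishes R M N n) (e : M ≃ₗ[R] M')
    (e' : N ≃ₗ[R] N') : ExtVanishes R M' N' n := by
  refine subsingleton_of_forall_eq 0 fun α => ?_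
  have hα : ((Abelian.Ext.mk₀ e.toModuleIso.hom).comp α (zero_add n)).comp
      (Abelian.Ext.mk₀ e'.toModuleIso.inv) (add_zero n) = 0 := h.elim _ _
  have := congr(((Abelian.Ext.mk₀ e.toModuleIso.inv).comp $hα (zero_add n)).comp
    (Abelian.Ext.mk₀ e'.toModuleIso.hom) (add_zero n))
  simpa [-LinearEquiv.toModuleIso_hom, -LinearEquiv.toModuleIso_inv] using this

section

variable {N₁ N₂ N₃ : Type u} [AddCommGroup N₁] [Module R N₁] [AddCommGroup N₂] [Module R N₂]
  [AddCommGroup N₃] [Module R N₃] {i : N₁ →ₗ[R] N₂} {p : N₂ →ₗ[R] N₃}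

theorem shortExact_of_exact (hi : Function.Injective i) (hp : Function.Surjective p)
    (hip : Function.Exact i p) :
    (ModuleCat.shortComplexOfCompEqZero i p hip.linearMap_comp_eq_zero).ShortExact :=
  ModuleCat.shortComplex_shortExact _ hip hi hp

theorem ExtVanishes.exists_lift (h : ExtVanishes R M N₁ 1) (hi : Function.Injective i)
    (hp : Function.Surjective p) (hip : Function.Exact i p) (φ : M →ₗ[R] N₃) :
    ∃ ψ : M →ₗ[R] N₂, p ∘ₗ ψ = φ := by
  obtain ⟨x, hx⟩ := Abelian.Ext.covariant_sequence_exact₃ _ (shortExact_of_exact hi hp hip)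
    (Abelian.Ext.mk₀ (ModuleCat.ofHom φ)) rfl (h.elim _ _)
  obtain ⟨ψ, rfl⟩ := (Abelian.Ext.mk₀_bijective _ _).surjective x
  rw [Abelian.Ext.mk₀_comp_mk₀] at hx
  exact ⟨ψ.hom, congr(($((Abelian.Ext.mk₀_bijective _ _).injective hx)).hom)⟩

end

variable {K F : Type u} [AddCommGroup K] [Module R K] [AddCommGroup F] [Module R F]
  {i : K →ₗ[R] F} {p : F →ₗ[R] M}

theorem extVanishes_succ_succ_iff [Module.Projective R F] (hi : Function.Injective i)
    (hp : Function.Surjective p) (hip : Function.Exact i p) {n : ℕ} :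
    ExtVanishes R M N (n + 2) ↔ ExtVanishes R K N (n + 1) := by
  have hS := shortExact_of_exact hi hp hip
  have hF : Projective (ModuleCat.of R F) := (IsProjective.iff_projective F).mp ‹_›
  constructor
  · refine fun h => subsingleton_of_forall_eq 0 fun α => ?_
    obtain ⟨β, hβ⟩ := Abelian.Ext.contravariant_sequence_exact₁ hS _ α
      (add_comm 1 (n + 1)) (h.elim _ _)
    rw [← hβ, Abelian.Ext.eq_zero_of_projective β, Abelian.Ext.comp_zero]
  · refine fun h => subsingleton_of_forall_eq 0 fun α => ?_
    obtain ⟨β, hβ⟩ := precomp_extClass_surjective_of_projective_X₂ _ hS (n + 1) α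
    rw [← hβ, h.elim β 0, map_zero]

theorem extVanishes_one_iff [Module.Projective R F] (hi : Function.Injective i)
    (hp : Function.Surjective p) (hip : Function.Exact i p) :
    ExtVanishes R M N 1 ↔ ∀ φ : K →ₗ[R] N, ∃ ψ : F →ₗ[R] N, ψ ∘ₗ i = φ := by
  have hS := shortExact_of_exact hi hp hip
  have hF : Projective (ModuleCat.of R F) := (IsProjective.iff_projective F).mp ‹_›
  constructor
  · intro h φ
    obtain ⟨x, hx⟩ := Abelian.Ext.contravariant_sequence_exact₁ hS _
      (Abelian.Ext.mk₀ (ModuleCat.ofHom φ)) (add_comm 1 0) (h.elim _ _)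
    obtain ⟨ψ, rfl⟩ := (Abelian.Ext.mk₀_bijective _ _).surjective x
    rw [Abelian.Ext.mk₀_comp_mk₀] at hx
    exact ⟨ψ.hom, congr(($((Abelian.Ext.mk₀_bijective _ _).injective hx)).hom)⟩
  · refine fun h => subsingleton_of_forall_eq 0 fun α => ?_
    obtain ⟨β, hβ⟩ := precomp_extClass_surjective_of_projective_X₂ _ hS 0 α
    obtain ⟨φ, rfl⟩ := (Abelian.Ext.mk₀_bijective _ _).surjective β
    obtain ⟨ψ, hψ⟩ := h φ.hom
    obtain rfl : ModuleCat.ofHom i ≫ ModuleCat.ofHom ψ = φ := ModuleCat.hom_ext hψ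
    rw [← hβ, ← Abelian.Ext.mk₀_comp_mk₀]
    exact hS.extClass_comp_assoc (Abelian.Ext.mk₀ (ModuleCat.ofHom ψ)) (h := add_comm 1 0)

end ExtVanishing

section ExtLocalization

variable {R : Type u} [CommRing R] (S : Submonoid R)
  {M N : Type u} [AddCommGroup M] [Module R M] [AddCommGroup N] [Module R N]

theorem exists_extend_localizedModule {K F : Type*} [AddCommGroup K] [Module R K]
    [Module.FinitePresentation R K] [AddCommGroup F] [Module R F] (i : K →ₗ[R] F)
    (h : ∀ φ : K →ₗ[R] N, ∃ ψ : F →ₗ[R] N, ψ ∘ₗ i = φ)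
    (φ : LocalizedModule S K →ₗ[Localization S] LocalizedModule S N) :
    ∃ ψ : LocalizedModule S F →ₗ[Localization S] LocalizedModule S N,
      ψ ∘ₗ LocalizedModule.map S i = φ := by
  obtain ⟨⟨φ₀, s⟩, hφ : (s : R) • φ = LocalizedModule.map S φ₀⟩ := IsLocalizedModule.surj S
    (LocalizedModule.map S :
      (K →ₗ[R] N) →ₗ[R] LocalizedModule S K →ₗ[Localization S] LocalizedModule S N) φ
  obtain ⟨ψ, rfl⟩ := h φ₀
  refine ⟨IsLocalization.mk' (Localization S) 1 s • LocalizedModule.map S ψ, ?_⟩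
  have hcomp : LocalizedModule.map S ψ ∘ₗ LocalizedModule.map S i =
      LocalizedModule.map S (ψ ∘ₗ i) := by
    ext x
    induction x with | _ x t => simp
  rw [LinearMap.smul_comp, hcomp, ← hφ, ← algebraMap_smul (Localization S) (s : R) φ, smul_smul,
    IsLocalization.mk'_spec, map_one, one_smul]

theorem exists_exact_finite_free (R : Type u) [CommRing R] [IsNoetherianRing R] (M : Type u)
    [AddCommGroup M] [Module R M] [Module.Finite R M] :
    ∃ (k : ℕ) (K : Type u) (_ : AddCommGroup K) (_ : Module R K) (_ : Module.Finite R K)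
      (i : K →ₗ[R] (Fin k → R)) (p : (Fin k → R) →ₗ[R] M),
      Function.Injective i ∧ Function.Surjective p ∧ Function.Exact i p := by
  obtain ⟨k, p, hp⟩ := Module.Finite.exists_fin' R M
  exact ⟨k, LinearMap.ker p, inferInstance, inferInstance, inferInstance, _, p,
    (LinearMap.ker p).subtype_injective, hp, p.exact_subtype_ker_map⟩

theorem ExtVanishes.localizedModule [IsNoetherianRing R] [Module.Finite R M] {n : ℕ}
    (h : ExtVanishes R M N (n + 1)) :
    ExtVanishes (Localization S) (LocalizedModule S M) (LocalizedModule S N) (n + 1) := by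
  induction n generalizing M with
  | zero =>
    obtain ⟨k, K, _, _, _, i, p, hi, hp, hip⟩ := exists_exact_finite_free R M
    have := Module.finitePresentation_of_finite R K
    rw [extVanishes_one_iff hi hp hip] at h
    exact (extVanishes_one_iff (LocalizedModule.map_injective S _ hi)
      (LocalizedModule.map_surjective S _ hp) (LocalizedModule.map_exact S _ _ hip)).mpr
      (exists_extend_localizedModule S _ h)
  | succ n ih =>
    obtain ⟨k, K, _, _, _, i, p, hi, hp, hip⟩ := exists_exact_finite_free R M
    rw [extVanishes_succ_succ_iff hi hp hip] at h
    exact (extVanishes_succ_succ_iff (LocalizedModule.map_injective S _ hi)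
      (LocalizedModule.map_surjective S _ hp) (LocalizedModule.map_exact S _ _ hip)).mpr (ih h)

end ExtLocalization

/-! ### Freeness from the vanishing of Ext -/

section LocalFreeness

variable {O : Type u} [CommRing O]

theorem linearIndependent_of_forall_sub_mem {B M ι : Type*} [CommRing B] [Algebra O B]
    [FaithfulSMul O B] [AddCommGroup M] [Module O M] [Finite ι] [DecidableEq ι] {J : Ideal B}
    (hJ : J ≤ Ideal.jacobson ⊥) {x : ι → M} {f : ι → M →ₗ[O] B}
    (hxf : ∀ i j, f j (x i) - (if i = j then 1 else 0) ∈ J) : LinearIndependent O x := by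
  have := Fintype.ofFinite ι
  rw [Fintype.linearIndependent_iff]
  intro v hv j
  let I : Ideal B := Ideal.span (Set.range fun i => algebraMap O B (v i))
  have hI : I ≤ J • I := by
    rw [Ideal.span_le]
    rintro _ ⟨j, rfl⟩
    have hsum : ∑ i, algebraMap O B (v i) * f j (x i) = 0 := by
      simpa [Algebra.smul_def] using congr(f j $hv)
    have hvj : algebraMap O B (v j) =
        -∑ i, (f j (x i) - (if i = j then 1 else 0)) • algebraMap O B (v i) := by
      simp_rw [smul_eq_mul, sub_mul, Finset.sum_sub_distrib, mul_comm (f j _), hsum]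
      simp
    simp only [SetLike.mem_coe, hvj]
    exact neg_mem (sum_mem fun i _ =>
      Submodule.smul_mem_smul (hxf i j) (Ideal.subset_span ⟨i, rfl⟩))
  have hI_bot := Submodule.eq_bot_of_le_smul_of_le_jacobson_bot J I
    (Submodule.fg_span (Set.finite_range _)) hI hJ
  have hvj : algebraMap O B (v j) ∈ (⊥ : Ideal B) := hI_bot ▸ Ideal.subset_span ⟨j, rfl⟩
  exact FaithfulSMul.algebraMap_injective O B (by simpa using hvj)

theorem exact_mulLeft_mkₐ {B : Type*} [CommRing B] [Algebra O B] (τ : B) :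
    Function.Exact (LinearMap.mulLeft O τ)
      (Ideal.Quotient.mkₐ O (Ideal.span {τ})).toLinearMap := by
  intro b
  exact Ideal.Quotient.eq_zero_iff_mem.trans <|
    Ideal.mem_span_singleton'.trans (by simp [mul_comm])

variable [IsLocalRing O] {M : Type u} [AddCommGroup M] [Module O M]

theorem exists_span_eq_top_and_coord (M : Type*) [AddCommGroup M] [Module O M]
    [Module.Finite O M] :
    ∃ (k : ℕ) (x : Fin k → M) (f : Fin k → M →ₗ[O] ResidueField O),
      Submodule.span O (Set.range x) = ⊤ ∧ ∀ i j, f j (x i) = if i = j then 1 else 0 := by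
  let b := Module.finBasis (ResidueField O) (TensorProduct O (ResidueField O) M)
  choose x hx using fun i =>
    TensorProduct.mk_surjective O M (ResidueField O) residue_surjective (b i)
  refine ⟨_, x, fun j => (b.coord j).restrictScalars O ∘ₗ TensorProduct.mk O (ResidueField O) M 1,
    span_eq_top_of_tmul_eq_basis x b hx, fun i j => ?_⟩
  rw [LinearMap.comp_apply, hx]
  simp [Finsupp.single_apply]

theorem maximalIdeal_map_le_jacobson_bot {B : Type*} [CommRing B] [Algebra O B]
    [Algebra.IsIntegral O B] :
    (maximalIdeal O).map (algebraMap O B) ≤ Ideal.jacobson ⊥ := by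
  refine le_sInf fun P ⟨_, hP⟩ => Ideal.map_le_iff_le_comap.mpr (le_of_eq ?_)
  exact (eq_maximalIdeal (Ideal.isMaximal_comap_of_isIntegral_of_isMaximal (R := O) P)).symm

theorem free_of_extVanishes_one {B : Type u} [CommRing B] [Algebra O B] [FaithfulSMul O B]
    [Algebra.IsIntegral O B] [Module.Finite O M] {τ : B}
    (hτ : (maximalIdeal O).map (algebraMap O B) = Ideal.span {τ}) (hτ_reg : IsRegular τ)
    (h : ExtVanishes O M B 1) : Module.Free O M := by
  obtain ⟨k, x, f, hx, hxf⟩ := exists_span_eq_top_and_coord (O := O) M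
  let ρ : ResidueField O →ₐ[O] B ⧸ Ideal.span {τ} :=
    Ideal.Quotient.liftₐ (maximalIdeal O) (Algebra.ofId O (B ⧸ Ideal.span {τ})) fun r hr =>
      Ideal.Quotient.eq_zero_iff_mem.mpr (hτ ▸ Ideal.mem_map_of_mem _ hr)
  choose g hg using fun j => h.exists_lift (i := LinearMap.mulLeft O τ) hτ_reg.left
    (Ideal.Quotient.mkₐ_surjective O _) (exact_mulLeft_mkₐ τ) (ρ.toLinearMap ∘ₗ f j)
  have hxg : ∀ i j, g j (x i) - (if i = j then 1 else 0) ∈ Ideal.span {τ} := by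
    intro i j
    rw [← Ideal.Quotient.eq_zero_iff_mem, map_sub]
    have : Ideal.Quotient.mk _ (g j (x i)) = ρ (f j (x i)) := congr($(hg j) (x i))
    rw [this, hxf]
    split_ifs <;> simp
  have hli : LinearIndependent O x :=
    linearIndependent_of_forall_sub_mem (hτ ▸ maximalIdeal_map_le_jacobson_bot) hxg
  exact Module.Free.of_basis (Module.Basis.mk hli hx.ge)

theorem mem_maximalIdeal_smul_top_iff {G : Type*} [AddCommGroup G] [Module O G]
    [Module.Free O G] {x s : O} (hxs : (Ideal.span {x}).colon {s} = maximalIdeal O) {g : G} :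
    g ∈ maximalIdeal O • (⊤ : Submodule O G) ↔ ∃ g', s • g = x • g' := by
  simp only [SetLike.ext_iff, Submodule.mem_colon_singleton, smul_eq_mul,
    Ideal.mem_span_singleton] at hxs
  constructor
  · intro hg
    induction hg using Submodule.smul_induction_on' with
    | smul r hr y _ =>
      obtain ⟨c, hc⟩ := (hxs r).mpr hr
      exact ⟨c • y, by rw [smul_smul, mul_comm, hc, mul_smul]⟩
    | add g₁ _ g₂ _ h₁ h₂ =>
      obtain ⟨g₁', h₁⟩ := h₁
      obtain ⟨g₂', h₂⟩ := h₂
      exact ⟨g₁' + g₂', by rw [smul_add, smul_add, h₁, h₂]⟩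
  · rintro ⟨g', hg'⟩
    let b := Module.Free.chooseBasis O G
    rw [← b.linearCombination_repr g]
    refine sum_mem fun j _ => Submodule.smul_mem_smul ((hxs _).mp ⟨b.repr g' j, ?_⟩) trivial
    simpa [mul_comm] using congr(b.repr $hg' j)

theorem mk_one_eq_zero_iff_mem_maximalIdeal_smul_top {G : Type*} [AddCommGroup G] [Module O G]
    {g : G} : TensorProduct.mk O (ResidueField O) G 1 g = 0 ↔
      g ∈ maximalIdeal O • (⊤ : Submodule O G) := by
  rw [← LinearMap.ker_tensorProductMk, LinearMap.mem_ker]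
  rfl

theorem free_of_exact_of_colon_eq_maximalIdeal {K F : Type*} [AddCommGroup K] [Module O K]
    [AddCommGroup F] [Module O F] [Module.Free O K] [Module.Finite O K] [Module.Free O F]
    [Module.Finite O F] {i : K →ₗ[O] F} {p : F →ₗ[O] M} (hi : Function.Injective i)
    (hp : Function.Surjective p) (hip : Function.Exact i p) {x s : O}
    (hxs : (Ideal.span {x}).colon {s} = maximalIdeal O) (hx : IsSMulRegular M x) :
    Module.Free O M := by
  refine Module.free_of_lTensor_residueField_injective i p hp hip ?_
  rw [injective_iff_map_eq_zero]
  intro z hz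
  obtain ⟨y, rfl⟩ := TensorProduct.mk_surjective O K (ResidueField O) residue_surjective z
  rw [TensorProduct.mk_apply, LinearMap.lTensor_tmul, ← TensorProduct.mk_apply,
    mk_one_eq_zero_iff_mem_maximalIdeal_smul_top, mem_maximalIdeal_smul_top_iff hxs] at hz
  rw [mk_one_eq_zero_iff_mem_maximalIdeal_smul_top, mem_maximalIdeal_smul_top_iff hxs]
  obtain ⟨f, hf⟩ := hz
  have hpf : p f = 0 := hx.right_eq_zero_of_smul <| by
    rw [← map_smul, ← hf, map_smul, hip.apply_apply_eq_zero, smul_zero]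
  obtain ⟨y', rfl⟩ := (hip f).mp hpf
  exact ⟨y', hi (by simpa using hf)⟩

theorem free_of_extVanishes_succ [IsNoetherianRing O] [Module.Finite O M] {B : Type u}
    [CommRing B] [Algebra O B] [FaithfulSMul O B] [Algebra.IsIntegral O B] {τ : B}
    (hτ : (maximalIdeal O).map (algebraMap O B) = Ideal.span {τ}) (hτ_reg : IsRegular τ)
    {x s : O} (hxs : (Ideal.span {x}).colon {s} = maximalIdeal O) (hxO : IsSMulRegular O x)
    (hxM : IsSMulRegular M x) {n : ℕ} (h : ExtVanishes O M B (n + 1)) : Module.Free O M := by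
  induction n generalizing M with
  | zero => exact free_of_extVanishes_one hτ hτ_reg h
  | succ n ih =>
    obtain ⟨k, K, _, _, _, i, p, hi, hp, hip⟩ := exists_exact_finite_free O M
    have hxK : IsSMulRegular K x := (IsSMulRegular.pi fun _ => hxO).of_injective i hi
    have := ih hxK ((extVanishes_succ_succ_iff hi hp hip).mp h)
    exact free_of_exact_of_colon_eq_maximalIdeal hi hp hip hxs hxM

end LocalFreeness

/-! ### Principal ideals of integrally closed rings -/

section IntegralMultiplier

open Polynomial

theorem isIntegral_of_forall_mul_mem {R Q : Type*} [CommRing R] [CommRing Q] [Algebra R Q]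
    {N : Submodule R Q} (hN : N.FG) {v x : Q} (hv : v ∈ N) (hv_unit : IsUnit v)
    (hx : ∀ y ∈ N, x * y ∈ N) : IsIntegral R x := by
  have : Module.Finite R N := Module.Finite.of_fg hN
  let f : Module.End R N := (LinearMap.mulLeft R x).restrict hx
  obtain ⟨P, hP_monic, hP⟩ := LinearMap.exists_monic_and_aeval_eq_zero R f
  have hf_pow (k : ℕ) : ((f ^ k) ⟨v, hv⟩ : Q) = x ^ k * v := by
    induction k with
    | zero => simp
    | succ k ih => rw [pow_succ', pow_succ', mul_assoc, ← ih]; rfl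
  have hf_aeval : (aeval f P ⟨v, hv⟩ : Q) = aeval x P * v := by
    simp [aeval_eq_sum_range, LinearMap.sum_apply, hf_pow, Finset.sum_mul]
  refine ⟨P, hP_monic, hv_unit.mul_left_eq_zero.1 ?_⟩
  rw [← aeval_def, ← hf_aeval, hP, LinearMap.zero_apply, ZeroMemClass.coe_zero]

theorem dvd_of_forall_mul_eq_mul {B Q : Type*} [CommRing B] [IsNoetherianRing B] [CommRing Q]
    [Algebra B Q] [IsIntegrallyClosedIn B Q] {α s : B} (hα : IsUnit (algebraMap B Q α))
    {n : Ideal B} (hαn : α ∈ n) (hs : ∀ y ∈ n, ∃ z ∈ n, s * y = α * z) : α ∣ s := by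
  obtain ⟨v, hv⟩ := hα.exists_left_inv
  have h_integral : IsIntegral B (algebraMap B Q s * v) := by
    refine isIntegral_of_forall_mul_mem (N := Submodule.map (Algebra.linearMap B Q) n)
      ((IsNoetherian.noetherian n).map _) (Submodule.mem_map_of_mem hαn) hα ?_
    rintro _ ⟨y, hy, rfl⟩
    obtain ⟨z, hz, hyz⟩ := hs y hy
    refine ⟨z, hz, ?_⟩
    have hyzQ := congr(algebraMap B Q $hyz)
    simp only [map_mul] at hyzQ
    simp only [Algebra.linearMap_apply]
    linear_combination (-v) * hyzQ - algebraMap B Q z * hv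
  obtain ⟨w, hw⟩ := IsIntegrallyClosedIn.algebraMap_eq_of_integral h_integral
  refine ⟨w, IsIntegralClosure.algebraMap_injective B B Q ?_⟩
  rw [map_mul, hw]
  linear_combination (-algebraMap B Q s) * hv

end IntegralMultiplier

section PrincipalIdeals

variable {B : Type*} [CommRing B]

theorem isUnit_coeIdeal_of_mul_eq_span_singleton {K n : Ideal B} {α : B}
    (hα : α ∈ nonZeroDivisors B) (hKn : K * n = Ideal.span {α}) :
    IsUnit (n : FractionalIdeal (nonZeroDivisors B) (FractionRing B)) := by
  apply isUnit_of_mul_isUnit_right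
    (x := (K : FractionalIdeal (nonZeroDivisors B) (FractionRing B)))
  rw [← FractionalIdeal.coeIdeal_mul, hKn, FractionalIdeal.coeIdeal_span_singleton]
  obtain ⟨b, hb⟩ := (IsLocalization.map_units (FractionRing B) ⟨α, hα⟩).exists_right_inv
  refine IsUnit.of_mul_eq_one (FractionalIdeal.spanSingleton _ b) ?_
  rw [FractionalIdeal.spanSingleton_mul_spanSingleton, hb, FractionalIdeal.spanSingleton_one]

variable [IsNoetherianRing B] {α : B}

theorem exists_mem_iff_dvd_mul_of_mem_minimalPrimes {q : Ideal B}
    (hq : q ∈ (Ideal.span {α}).minimalPrimes) : ∃ s : B, ∀ y, y ∈ q ↔ α ∣ y * s := by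
  have h_assoc : q ∈ associatedPrimes B (B ⧸ Ideal.span {α}) := by
    apply Module.associatedPrimes.minimalPrimes_annihilator_subset_associatedPrimes
    rwa [Ideal.annihilator_quotient]
  obtain ⟨-, x, hx⟩ := isAssociatedPrime_iff.1 (AssociatedPrimes.mem_iff.1 h_assoc)
  obtain ⟨s, rfl⟩ := Ideal.Quotient.mk_surjective x
  refine ⟨s, fun y => ?_⟩
  rw [hx, Submodule.mem_colon_singleton, Submodule.mem_bot, ← Ideal.mem_span_singleton,
    ← Ideal.Quotient.eq_zero_iff_mem]
  rfl

-- With `K = (α) : n`, either `K n = (α)` or `K n ⊆ α n`; in the second case `K / α` stabilises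
-- `n`, hence consists of integral elements.
theorem exists_mul_eq_span_singleton_of_isMaximal {Q : Type*} [CommRing Q] [Algebra B Q]
    [IsIntegrallyClosedIn B Q] (hα : IsUnit (algebraMap B Q α)) {n : Ideal B} [hn : n.IsMaximal]
    (hmin : n ∈ (Ideal.span {α}).minimalPrimes) : ∃ K : Ideal B, K * n = Ideal.span {α} := by
  have hαn : α ∈ n := (Ideal.span_singleton_le_iff_mem n).1 hmin.1.2
  obtain ⟨s, hs⟩ := exists_mem_iff_dvd_mul_of_mem_minimalPrimes hmin
  have hs_dvd : ¬ α ∣ s := fun h => hn.ne_top ((Ideal.eq_top_iff_one n).2 ((hs 1).2 (by simpa)))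
  let K : Ideal B := (Ideal.span {α}).colon (n : Set B)
  have hsK : s ∈ K := Submodule.mem_colon.2 fun y hy => by
    rw [smul_eq_mul, mul_comm, Ideal.mem_span_singleton]
    exact (hs y).1 hy
  have hαK : α ∈ K := Submodule.mem_colon.2 fun y _ =>
    Ideal.mul_mem_right _ _ (Ideal.mem_span_singleton_self α)
  let J : Ideal B := Submodule.comap (LinearMap.mulLeft B α) (K * n)
  have hJ_top : J = ⊤ := by
    by_contra hJ
    have hnJ : n = J := hn.eq_of_le hJ fun y hy => Ideal.mul_mem_mul hαK hy
    refine hs_dvd (dvd_of_forall_mul_eq_mul hα hαn fun y hy => ?_)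
    obtain ⟨z, hz⟩ := (hs y).1 hy
    rw [mul_comm] at hz
    refine ⟨z, ?_, hz⟩
    rw [hnJ, Submodule.mem_comap, LinearMap.mulLeft_apply, ← hz]
    exact Ideal.mul_mem_mul hsK hy
  refine ⟨K, le_antisymm (Ideal.mul_le.2 fun k hk y hy => Submodule.mem_colon.1 hk y hy) ?_⟩
  rw [Ideal.span_singleton_le_iff_mem]
  simpa [J] using (Ideal.eq_top_iff_one J).1 hJ_top

theorem exists_eq_span_singleton_of_isMaximal {Q : Type*} [CommRing Q] [Algebra B Q]
    [IsIntegrallyClosedIn B Q] (hα : IsUnit (algebraMap B Q α))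
    (hmem : ∀ n : Ideal B, n.IsMaximal → α ∈ n)
    (hmax : ∀ q : Ideal B, q.IsPrime → α ∈ q → q.IsMaximal) (n : Ideal B) [hn : n.IsMaximal] :
    ∃ t, n = Ideal.span {t} := by
  have hα_reg : α ∈ nonZeroDivisors B :=
    mem_nonZeroDivisors_of_injective (IsIntegralClosure.algebraMap_injective B B Q)
      hα.mem_nonZeroDivisors
  have hmin : ∀ q : Ideal B, q.IsMaximal → q ∈ (Ideal.span {α}).minimalPrimes := fun q hq =>
    ⟨⟨hq.isPrime, (Ideal.span_singleton_le_iff_mem q).2 (hmem q hq)⟩, fun r hr hrq =>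
      ((hmax r hr.1 ((Ideal.span_singleton_le_iff_mem r).1 hr.2)).eq_of_le hq.ne_top hrq).ge⟩
  have hfin : {I : Ideal B | I.IsMaximal}.Finite :=
    (Ideal.finite_minimalPrimes_of_isNoetherianRing B (Ideal.span {α})).subset hmin
  obtain ⟨K, hK⟩ := exists_mul_eq_span_singleton_of_isMaximal hα (hmin n hn)
  exact (Ideal.IsPrincipal.of_finite_maximals_of_isUnit hfin
    (isUnit_coeIdeal_of_mul_eq_span_singleton hα_reg hK)).principal

theorem lt_comap_mulLeft_of_mem_nonZeroDivisors {I : Ideal B} {t : B} (ht : ¬ IsUnit t)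
    (hα : α ∈ nonZeroDivisors B) (hαI : α ∈ I) (hI : I ≤ Ideal.span {t}) :
    I < Submodule.comap (LinearMap.mulLeft B t) I := by
  refine lt_of_le_of_ne (fun y hy => I.mul_mem_left t hy) fun heq => ?_
  have hI_le : I ≤ Ideal.span {t} • I := fun y hy => by
    obtain ⟨z, rfl⟩ := Ideal.mem_span_singleton.1 (hI hy)
    have hz : z ∈ I := heq ▸ hy
    exact Submodule.smul_mem_smul (Ideal.mem_span_singleton_self t) hz
  obtain ⟨r, hr, hrI⟩ := Submodule.exists_sub_one_mem_and_smul_eq_zero_of_fg_of_le_smul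
    (Ideal.span {t}) I (IsNoetherian.noetherian I) hI_le
  have hr_zero : r = 0 := mem_nonZeroDivisors_iff_right.1 hα r (hrI α hαI)
  rw [hr_zero, zero_sub, neg_mem_iff, Ideal.mem_span_singleton] at hr
  exact ht (isUnit_of_dvd_one hr)

theorem exists_eq_span_singleton_of_mem (hα : α ∈ nonZeroDivisors B)
    (hprinc : ∀ n : Ideal B, n.IsMaximal → ∃ t, n = Ideal.span {t}) (I : Ideal B) (hI : α ∈ I) :
    ∃ t ∈ nonZeroDivisors B, I = Ideal.span {t} := by
  induction I using IsNoetherian.induction with | hgt I ih =>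
  by_cases hI_top : I = ⊤
  · exact ⟨1, one_mem _, by rw [hI_top, Ideal.span_singleton_one]⟩
  obtain ⟨n, hn, hIn⟩ := Ideal.exists_le_maximal I hI_top
  obtain ⟨t, rfl⟩ := hprinc n hn
  have ht : ¬ IsUnit t := fun h => hn.ne_top (Ideal.span_singleton_eq_top.2 h)
  have hlt := lt_comap_mulLeft_of_mem_nonZeroDivisors ht hα hI hIn
  obtain ⟨d, -, hd⟩ := ih _ hlt (hlt.le hI)
  have hI_eq : I = Ideal.span {t * d} := by
    refine le_antisymm (fun y hy => ?_) ?_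
    · obtain ⟨z, rfl⟩ := Ideal.mem_span_singleton.1 (hIn hy)
      have hz : z ∈ Ideal.span {d} := hd ▸ hy
      exact Ideal.mem_span_singleton.2 (mul_dvd_mul_left t (Ideal.mem_span_singleton.1 hz))
    · have hdI : d ∈ Submodule.comap (LinearMap.mulLeft B t) I :=
        hd ▸ Ideal.mem_span_singleton_self d
      exact (Ideal.span_singleton_le_iff_mem I).2 hdI
  obtain ⟨c, rfl⟩ := Ideal.mem_span_singleton.1 (hI_eq ▸ hI)
  exact ⟨t * d, (mul_mem_nonZeroDivisors.1 hα).1, hI_eq⟩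

end PrincipalIdeals

/-! ### The local case -/

section Depth

variable {O : Type u} [CommRing O] [IsLocalRing O]

theorem dvd_of_extVanishes_one (h : ExtVanishes O (ResidueField O) O 1) {a b : O}
    (ha : a ∈ nonZeroDivisors O) (ham : a ∈ maximalIdeal O)
    (hb : ∀ y ∈ maximalIdeal O, a ∣ y * b) : a ∣ b := by
  let φ : ResidueField O →ₗ[O] O ⧸ Ideal.span {a} :=
    (maximalIdeal O).liftQ (LinearMap.toSpanSingleton O _ (Ideal.Quotient.mk (Ideal.span {a}) b))
      fun y hy => by
        rw [LinearMap.mem_ker, LinearMap.toSpanSingleton_apply]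
        exact Ideal.Quotient.eq_zero_iff_mem.2 (Ideal.mem_span_singleton.2 (hb y hy))
  obtain ⟨ψ, hψ⟩ := h.exists_lift (i := LinearMap.mulLeft O a)
    (isRegular_iff_mem_nonZeroDivisors.2 ha).left (Ideal.Quotient.mkₐ_surjective O _)
    (exact_mulLeft_mkₐ a) φ
  have hψ_one : ψ 1 = 0 := by
    have hψa : a * ψ 1 = 0 := by
      rw [← smul_eq_mul, ← map_smul, Algebra.smul_def, mul_one, ResidueField.algebraMap_eq,
        (residue_eq_zero_iff a).2 ham, map_zero]
    exact (mul_right_mem_nonZeroDivisors_eq_zero_iff ha).1 (by rwa [mul_comm])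
  have hφ_one : φ 1 = Ideal.Quotient.mk _ b := one_smul O (Ideal.Quotient.mk (Ideal.span {a}) b)
  rw [← Ideal.mem_span_singleton, ← Ideal.Quotient.eq_zero_iff_mem, ← hφ_one, ← hψ,
    LinearMap.comp_apply, hψ_one, map_zero]

theorem two_le_ringKrullDim_of_mem_nonZeroDivisors {a : O} (ha : a ∈ nonZeroDivisors O)
    {q : Ideal O} [hq : q.IsPrime] (haq : a ∈ q) (hqm : ¬ q.IsMaximal) : 2 ≤ ringKrullDim O := by
  have hq_lt : q < maximalIdeal O :=
    lt_of_le_of_ne (le_maximalIdeal hq.ne_top) fun h => hqm (h ▸ maximalIdeal.isMaximal O)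
  obtain ⟨P, hP, hPq⟩ := Ideal.exists_minimalPrimes_le (bot_le : (⊥ : Ideal O) ≤ q)
  have haP : a ∉ P := fun h =>
    Set.disjoint_left.1 (Ideal.disjoint_nonZeroDivisors_of_mem_minimalPrimes hP) h ha
  have hP_lt : P < q := lt_of_le_of_ne hPq fun h => haP (h ▸ haq)
  let lower : LTSeries (PrimeSpectrum O) :=
    (RelSeries.singleton _ (⟨P, hP.1.1⟩ : PrimeSpectrum O)).snoc ⟨q, hq⟩ hP_lt
  have h_last : lower.last = ⟨q, hq⟩ := RelSeries.last_snoc _ _ _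
  let chain := lower.snoc ⟨maximalIdeal O, inferInstance⟩ (show lower.last < _ from h_last ▸ hq_lt)
  exact Order.le_krullDim_iff.2 ⟨chain, rfl⟩

theorem subsingleton_extMod_of_lt_moduleDepth {O M : Type} [CommRing O] [IsLocalRing O]
    [AddCommGroup M] [Module O M] {i : ℕ} (h : (i : WithBot (WithTop ℕ)) < moduleDepth O M) :
    Subsingleton (ExtMod O (ResidueField O) M i) := by
  by_contra h_ext
  exact h.not_ge (sInf_le ⟨i, rfl, not_subsingleton_iff_nontrivial.1 h_ext⟩)

theorem isMaximal_of_colon_eq_maximalIdeal {O : Type} [CommRing O] [IsLocalRing O]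
    (hS2 : min 2 (ringKrullDim O) ≤ moduleDepth O O) {a b : O} (ha : a ∈ nonZeroDivisors O)
    (hab : (Ideal.span {a}).colon {b} = maximalIdeal O) (q : Ideal O) [hq : q.IsPrime]
    (haq : a ∈ q) : q.IsMaximal := by
  by_contra hqm
  have h_depth : 2 ≤ moduleDepth O O :=
    (min_eq_left (two_le_ringKrullDim_of_mem_nonZeroDivisors ha haq hqm)).ge.trans hS2
  have h_ext : ExtVanishes O (ResidueField O) O 1 :=
    subsingleton_abelianExt_succ_of_subsingleton_ext <|
      subsingleton_extMod_of_lt_moduleDepth (lt_of_lt_of_le (by norm_num) h_depth)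
  have hb (y : O) : y ∈ maximalIdeal O ↔ a ∣ y * b := by
    rw [← hab, Submodule.mem_colon_singleton, smul_eq_mul, Ideal.mem_span_singleton]
  have hab_dvd : a ∣ b := dvd_of_extVanishes_one h_ext ha (le_maximalIdeal hq.ne_top haq)
    fun y hy => (hb y).1 hy
  exact (Ideal.ne_top_iff_one _).1 (maximalIdeal.isMaximal O).ne_top ((hb 1).2 (by rwa [one_mul]))

end Depth

section LocalCase

variable {O B : Type u} [CommRing O] [CommRing B] [Algebra O B]

theorem nonempty_linearEquiv_of_map_eq_span_singleton [FaithfulSMul O B] {c : Ideal O} {γ : B}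
    (hγ : γ ∈ nonZeroDivisors B) (hcγ : c.map (algebraMap O B) = Ideal.span {γ})
    (hc : ∀ r ∈ c, ∀ x : B, ∃ r' ∈ c, algebraMap O B r' = r • x) : Nonempty (c ≃ₗ[O] B) := by
  let ι : c →ₗ[O] B := Algebra.linearMap O B ∘ₗ c.subtype
  have hι : Function.Injective ι :=
    (FaithfulSMul.algebraMap_injective O B).comp Subtype.val_injective
  have hμ : Function.Injective (LinearMap.mulLeft O γ) :=
    (isRegular_iff_mem_nonZeroDivisors.2 hγ).left
  have h_map (z : B) : z ∈ c.map (algebraMap O B) ↔ ∃ r ∈ c, algebraMap O B r = z := by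
    refine ⟨fun hz => ?_, fun ⟨r, hr, hrz⟩ => hrz ▸ Ideal.mem_map_of_mem _ hr⟩
    induction hz using Submodule.span_induction with
    | mem _ hz => exact hz
    | zero => exact ⟨0, c.zero_mem, map_zero _⟩
    | add z z' _ _ hz hz' =>
      obtain ⟨⟨r, hr, rfl⟩, ⟨r', hr', rfl⟩⟩ := And.intro hz hz'
      exact ⟨r + r', c.add_mem hr hr', map_add _ _ _⟩
    | smul x z _ hz =>
      obtain ⟨r, hr, rfl⟩ := hz
      obtain ⟨r', hr', h⟩ := hc r hr x
      exact ⟨r', hr', by rw [h, Algebra.smul_def, smul_eq_mul, mul_comm]⟩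
  have h_range : LinearMap.range ι = LinearMap.range (LinearMap.mulLeft O γ) := by
    ext z
    calc z ∈ LinearMap.range ι ↔ z ∈ c.map (algebraMap O B) := by simp [h_map, ι]
      _ ↔ z ∈ LinearMap.range (LinearMap.mulLeft O γ) := by
        simp [hcγ, Ideal.mem_span_singleton', mul_comm]
  exact ⟨(LinearEquiv.ofInjective ι hι).trans ((LinearEquiv.ofEq _ _ h_range).trans
    (LinearEquiv.ofInjective _ hμ).symm)⟩

variable [IsLocalRing O]

theorem exists_eq_span_singleton_of_algebraMap_mem [IsNoetherianRing B] [Algebra.IsIntegral O B]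
    {Q : Type v} [CommRing Q] [Algebra B Q] [IsIntegrallyClosedIn B Q] {a : O}
    (ha : a ∈ maximalIdeal O) (ha_unit : IsUnit (algebraMap B Q (algebraMap O B a)))
    (hmax : ∀ q : Ideal O, q.IsPrime → a ∈ q → q.IsMaximal) (I : Ideal B)
    (hI : algebraMap O B a ∈ I) : ∃ t ∈ nonZeroDivisors B, I = Ideal.span {t} := by
  have ha_reg : algebraMap O B a ∈ nonZeroDivisors B :=
    mem_nonZeroDivisors_of_injective (IsIntegralClosure.algebraMap_injective B B Q)
      ha_unit.mem_nonZeroDivisors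
  refine exists_eq_span_singleton_of_mem ha_reg (fun n hn =>
    exists_eq_span_singleton_of_isMaximal ha_unit (fun P hP => ?_) (fun q hq haq => ?_) n) I hI
  · exact Ideal.mem_sInf.1
      (maximalIdeal_map_le_jacobson_bot (Ideal.mem_map_of_mem (algebraMap O B) ha)) ⟨bot_le, hP⟩
  · have := hmax (q.comap (algebraMap O B)) inferInstance haq
    exact Ideal.isMaximal_of_isIntegral_of_isMaximal_comap (R := O) q this

theorem exists_linearMap_isUnit_apply_one [Nontrivial B] [Algebra.IsIntegral O B]
    [Module.Free O B] : ∃ φ : B →ₗ[O] O, IsUnit (φ 1) := by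
  by_contra! h_nonunit
  let e := Module.Free.chooseBasis O B
  have h_one : (1 : B) ∈ (maximalIdeal O).map (algebraMap O B) := by
    rw [← e.linearCombination_repr 1, Finsupp.linearCombination_apply]
    refine Ideal.sum_mem _ fun i _ => ?_
    simp only [Algebra.smul_def]
    exact Ideal.mul_mem_right _ _
      (Ideal.mem_map_of_mem _ ((mem_maximalIdeal _).2 (h_nonunit (e.coord i))))
  have h_jacobson : (1 : B) ∈ Ideal.jacobson ⊥ := maximalIdeal_map_le_jacobson_bot h_one
  exact bot_ne_top (Ideal.jacobson_eq_top_iff.1 ((Ideal.eq_top_iff_one _).2 h_jacobson))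

-- `a (φ x - φ 1 x) = 0` because `a x` lies in `O`.
theorem surjective_algebraMap_of_free [Nontrivial B] [Algebra.IsIntegral O B] [Module.Free O B]
    {a : O} (ha : algebraMap O B a ∈ nonZeroDivisors B)
    (haB : ∀ x : B, ∃ r : O, algebraMap O B r = a • x) :
    Function.Surjective (algebraMap O B) := by
  intro x
  obtain ⟨φ, w, hw⟩ := exists_linearMap_isUnit_apply_one (O := O) (B := B)
  obtain ⟨r, hr⟩ := haB x
  have hr_one : r • (1 : B) = a • x := by rw [← hr, Algebra.algebraMap_eq_smul_one]
  have hφr : r * w = a * φ x := by rw [hw]; simpa using congr(φ $hr_one)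
  have hφx : algebraMap O B (φ x) = algebraMap O B w * x := by
    refine (mul_cancel_left_mem_nonZeroDivisors ha).1 ?_
    rw [← map_mul, ← hφr, map_mul, hr, Algebra.smul_def]
    ring
  refine ⟨φ x * ↑w⁻¹, ?_⟩
  rw [map_mul, hφx, mul_right_comm, ← map_mul, Units.mul_inv, map_one, one_mul]

theorem surjective_algebraMap_of_extVanishes [IsNoetherianRing O] [Module.Finite O B]
    [FaithfulSMul O B] {Q : Type v} [CommRing Q] [Algebra B Q] [IsIntegrallyClosedIn B Q]
    {c : Ideal O} (hc : ∀ r ∈ c, ∀ x : B, ∃ r' ∈ c, algebraMap O B r' = r • x)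
    {a b : O} (hac : a ∈ c) (ham : a ∈ maximalIdeal O) (ha : a ∈ nonZeroDivisors O)
    (ha_unit : IsUnit (algebraMap B Q (algebraMap O B a)))
    (hab : (Ideal.span {a}).colon {b} = maximalIdeal O)
    (hmax : ∀ q : Ideal O, q.IsPrime → a ∈ q → q.IsMaximal) {n : ℕ}
    (h : ExtVanishes O c c (n + 1)) : Function.Surjective (algebraMap O B) := by
  have : IsNoetherianRing B := IsNoetherianRing.of_finite O B
  have : Nontrivial B := (FaithfulSMul.algebraMap_injective O B).nontrivial
  have haO_reg : IsSMulRegular O a := (isRegular_iff_mem_nonZeroDivisors.2 ha).left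
  have haB_reg : algebraMap O B a ∈ nonZeroDivisors B :=
    mem_nonZeroDivisors_of_injective (IsIntegralClosure.algebraMap_injective B B Q)
      ha_unit.mem_nonZeroDivisors
  have h_principal := exists_eq_span_singleton_of_algebraMap_mem ham ha_unit hmax
  obtain ⟨γ, hγ, hcγ⟩ := h_principal (c.map (algebraMap O B)) (Ideal.mem_map_of_mem _ hac)
  obtain ⟨τ, hτ, hmτ⟩ :=
    h_principal ((maximalIdeal O).map (algebraMap O B)) (Ideal.mem_map_of_mem _ ham)
  obtain ⟨e⟩ := nonempty_linearEquiv_of_map_eq_span_singleton hγ hcγ hc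
  have hc_free : Module.Free O c :=
    free_of_extVanishes_succ hmτ (isRegular_iff_mem_nonZeroDivisors.2 hτ) hab haO_reg
      (haO_reg.submodule c a) (h.of_linearEquiv (LinearEquiv.refl O c) e)
  have hB_free : Module.Free O B := Module.Free.of_equiv e
  exact surjective_algebraMap_of_free haB_reg fun x => (hc a hac x).imp fun _ hr => hr.2

end LocalCase

/-! ### Reduction to the local case -/

section Localization

theorem colon_map_eq_maximalIdeal {R O : Type*} [CommRing R] [CommRing O] [IsLocalRing O]
    [Algebra R O] {I p : Ideal R} [hp : p.IsPrime] [IsLocalization.AtPrime O p] {b : R}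
    (hb : I.colon {b} = p) :
    (I.map (algebraMap R O)).colon {algebraMap R O b} = maximalIdeal O := by
  have hpb (r : R) : r ∈ p ↔ r * b ∈ I := by rw [← hb, Submodule.mem_colon_singleton, smul_eq_mul]
  ext y
  obtain ⟨r, t, rfl⟩ := IsLocalization.exists_mk'_eq p.primeCompl y
  rw [IsLocalization.AtPrime.mk'_mem_maximal_iff O p, Submodule.mem_colon_singleton, smul_eq_mul,
    mul_comm, IsLocalization.mul_mk'_eq_mk'_of_mul, IsLocalization.mk'_mem_map_algebraMap_iff]
  refine ⟨fun ⟨u, hu, hub⟩ => ?_, fun hr => ⟨1, one_mem _, ?_⟩⟩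
  · rw [mul_comm b, ← mul_assoc, ← hpb] at hub
    exact (hp.mem_or_mem hub).resolve_left hu
  · rwa [one_mul, mul_comm, ← hpb]

theorem isIntegrallyClosedIn_localization {A Q : Type*} [CommRing A] [CommRing Q] [Algebra A Q]
    [IsIntegrallyClosedIn A Q] (M : Submonoid A) :
    IsIntegrallyClosedIn (Localization M) (Localization (Algebra.algebraMapSubmonoid Q M)) := by
  refine isIntegrallyClosedIn_iff.2 ⟨localizationAlgebra_injective _ _
    (IsIntegralClosure.algebraMap_injective A A Q), fun {x} hx => ?_⟩
  obtain ⟨⟨y, _, t, ht, rfl⟩, hxy⟩ := IsLocalization.surj (Algebra.algebraMapSubmonoid Q M) x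
  obtain ⟨m, hm⟩ := hx.exists_multiple_integral_of_isLocalization M _
  have hmy : IsIntegral A
      (algebraMap Q (Localization (Algebra.algebraMapSubmonoid Q M)) (m.1 • y)) := by
    rw [Algebra.smul_def, map_mul, ← hxy, mul_left_comm, ← mul_assoc, mul_comm,
      ← IsScalarTower.algebraMap_apply, ← IsScalarTower.algebraMap_apply]
    exact isIntegral_algebraMap.mul (by rwa [mul_comm, ← Algebra.smul_def])
  obtain ⟨u, hu, huy⟩ := IsLocalization.exists_isIntegral_smul_of_isIntegral_map M hmy
  obtain ⟨z, hz⟩ := IsIntegrallyClosedIn.algebraMap_eq_of_integral huy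
  refine ⟨IsLocalization.mk' _ z (⟨u, hu⟩ * m * ⟨t, ht⟩), ?_⟩
  rw [IsLocalization.algebraMap_mk' Q, IsLocalization.mk'_eq_iff_eq_mul, hz]
  simp only [Algebra.smul_def, map_mul, ← hxy, Submonoid.coe_mul]
  ring

variable {R A : Type*} [CommRing R] [CommRing A] [Algebra R A]

theorem colon_span_singleton_eq [FaithfulSMul R A] {a b : R} {s : A}
    (ha : algebraMap R A a ∈ nonZeroDivisors A) (hb : algebraMap R A b = a • s) :
    (Ideal.span {a}).colon {b} = (LinearMap.range (Algebra.linearMap R A)).colon {s} := by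
  ext r
  simp only [Submodule.mem_colon_singleton, smul_eq_mul, Ideal.mem_span_singleton,
    LinearMap.mem_range, Algebra.linearMap_apply]
  refine exists_congr fun x => ?_
  rw [← (FaithfulSMul.algebraMap_injective R A).eq_iff,
    ← mul_cancel_left_mem_nonZeroDivisors (x := algebraMap R A x) ha, map_mul, map_mul, hb,
    eq_comm, Algebra.smul_def, Algebra.smul_def, mul_left_comm]

theorem exists_mem_map_algebraMap_eq_smul (S : Submonoid R) {c : Ideal R}
    (hc : ∀ r ∈ c, ∀ x : A, ∃ r' ∈ c, algebraMap R A r' = r • x) :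
    ∀ r ∈ c.map (algebraMap R (Localization S)),
      ∀ x : Localization (Algebra.algebraMapSubmonoid A S),
        ∃ r' ∈ c.map (algebraMap R (Localization S)), algebraMap _ _ r' = r • x := by
  intro r hr x
  obtain ⟨⟨r₀, s⟩, hr₀⟩ := (IsLocalization.mem_map_algebraMap_iff S _).1 hr
  obtain ⟨⟨y, _, t, ht, rfl⟩, hxy⟩ := IsLocalization.surj (Algebra.algebraMapSubmonoid A S) x
  obtain ⟨r', hr', hry⟩ := hc r₀ r₀.2 y
  refine ⟨IsLocalization.mk' _ r' (s * ⟨t, ht⟩), ?_, ?_⟩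
  · exact (IsLocalization.mk'_mem_map_algebraMap_iff ..).2 ⟨1, one_mem S, by simpa using hr'⟩
  · rw [IsLocalization.algebraMap_mk' A, IsLocalization.mk'_eq_iff_eq_mul, hry]
    have hr₀B := congr(algebraMap _ (Localization (Algebra.algebraMapSubmonoid A S)) $hr₀)
    simp only [Algebra.smul_def, map_mul, Submonoid.coe_mul,
      ← IsScalarTower.algebraMap_apply] at hr₀B hxy ⊢
    rw [← hr₀B, ← hxy]
    ring

theorem ExtVanishes.ideal_map [IsNoetherianRing R] (S : Submonoid R) {I J : Ideal R} {n : ℕ}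
    (h : ExtVanishes R I J (n + 1)) :
    ExtVanishes (Localization S) (I.map (algebraMap R (Localization S)))
      (J.map (algebraMap R (Localization S))) (n + 1) := by
  let e (K : Ideal R) :
      LocalizedModule S K ≃ₗ[Localization S] K.map (algebraMap R (Localization S)) :=
    (IsLocalizedModule.linearEquiv S (LocalizedModule.mkLinearMap S K)
      (Algebra.idealMap (S := Localization S) K)).extendScalarsOfIsLocalization S (Localization S)
  exact (h.localizedModule S).of_linearEquiv (e I) (e J)

end Localization

section Global

variable {R A : Type} [CommRing R] [CommRing A] [Algebra R A] [IsNoetherianRing R]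
  [Module.Finite R A] [FaithfulSMul R A] {Q : Type v} [CommRing Q] [Algebra A Q]
  [IsIntegrallyClosedIn A Q]

theorem surjective_algebraMap_atPrime_of_extVanishes (hS2 : SerreS2 R) {c : Ideal R}
    (hc : ∀ r ∈ c, ∀ x : A, ∃ r' ∈ c, algebraMap R A r' = r • x) {a b : R} (hac : a ∈ c)
    (ha_unit : IsUnit (algebraMap A Q (algebraMap R A a))) {p : Ideal R} [p.IsPrime]
    (hab : (Ideal.span {a}).colon {b} = p) {n : ℕ} (h : ExtVanishes R c c (n + 1)) :
    Function.Surjective (algebraMap (Localization.AtPrime p)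
      (Localization (Algebra.algebraMapSubmonoid A p.primeCompl))) := by
  let O := Localization.AtPrime p
  let B := Localization (Algebra.algebraMapSubmonoid A p.primeCompl)
  let Q' := Localization
    (Algebra.algebraMapSubmonoid Q (Algebra.algebraMapSubmonoid A p.primeCompl))
  have ha : algebraMap R O a ∈ nonZeroDivisors O := by
    refine IsLocalization.nonZeroDivisors_le_comap p.primeCompl O ?_
    exact mem_nonZeroDivisors_of_injective (FaithfulSMul.algebraMap_injective R A)
      (mem_nonZeroDivisors_of_injective (IsIntegralClosure.algebraMap_injective A A Q)
        ha_unit.mem_nonZeroDivisors)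
  have hap : a ∈ p := by
    rw [← hab, Submodule.mem_colon_singleton, smul_eq_mul]
    exact Ideal.mul_mem_right b _ (Ideal.mem_span_singleton_self a)
  have hab_loc : (Ideal.span {algebraMap R O a}).colon {algebraMap R O b} = maximalIdeal O := by
    rw [← Set.image_singleton, ← Ideal.map_span]
    exact colon_map_eq_maximalIdeal hab
  have : IsNoetherianRing O := IsLocalization.isNoetherianRing p.primeCompl O inferInstance
  have : Module.Finite O B := Module.Finite.of_isLocalization R A p.primeCompl
  have : FaithfulSMul O B := (faithfulSMul_iff_algebraMap_injective O B).2
    (localizationAlgebra_injective _ _ (FaithfulSMul.algebraMap_injective R A))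
  have : IsIntegrallyClosedIn B Q' := isIntegrallyClosedIn_localization _
  refine surjective_algebraMap_of_extVanishes (Q := Q')
    (exists_mem_map_algebraMap_eq_smul p.primeCompl hc) (Ideal.mem_map_of_mem _ hac) ?_ ha ?_
    hab_loc (fun q _ => isMaximal_of_colon_eq_maximalIdeal (hS2 p) ha hab_loc q)
    (h.ideal_map p.primeCompl)
  · exact (IsLocalization.AtPrime.to_map_mem_maximal_iff O p a).2 hap
  · rw [← IsScalarTower.algebraMap_apply R O B, IsScalarTower.algebraMap_apply R A B,
      ← IsScalarTower.algebraMap_apply A B Q', IsScalarTower.algebraMap_apply A Q Q']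
    exact ha_unit.map _

theorem surjective_algebraMap_of_serreS2_of_extVanishes (hS2 : SerreS2 R) {c : Ideal R}
    (hc : ∀ r ∈ c, ∀ x : A, ∃ r' ∈ c, algebraMap R A r' = r • x) {a : R} (hac : a ∈ c)
    (ha_unit : IsUnit (algebraMap A Q (algebraMap R A a))) {n : ℕ}
    (h : ExtVanishes R c c (n + 1)) : Function.Surjective (algebraMap R A) := by
  rw [← Algebra.coe_linearMap, ← LinearMap.range_eq_top]
  by_contra hrange
  obtain ⟨s, -, hs⟩ := SetLike.exists_of_lt (lt_top_iff_ne_top.2 hrange)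
  obtain ⟨r₀, p, hp, hps⟩ := exists_isPrime_colon_singleton_smul hs
  obtain ⟨b, -, hb⟩ := hc a hac (r₀ • s)
  have ha_nzd : algebraMap R A a ∈ nonZeroDivisors A :=
    mem_nonZeroDivisors_of_injective (IsIntegralClosure.algebraMap_injective A A Q)
      ha_unit.mem_nonZeroDivisors
  have hab : (Ideal.span {a}).colon {b} = p := by
    rw [colon_span_singleton_eq ha_nzd hb]
    ext r
    rw [Submodule.mem_colon_singleton, hps]
  obtain ⟨y, hy⟩ := surjective_algebraMap_atPrime_of_extVanishes hS2 hc hac ha_unit hab h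
    (algebraMap A _ (r₀ • s))
  obtain ⟨r, t, rfl⟩ := IsLocalization.exists_mk'_eq p.primeCompl y
  rw [IsLocalization.algebraMap_mk' A, IsLocalization.mk'_eq_iff_eq_mul, ← map_mul,
    IsLocalization.eq_iff_exists (Algebra.algebraMapSubmonoid A p.primeCompl)] at hy
  obtain ⟨⟨_, u, hu, rfl⟩, hut⟩ := hy
  refine mul_mem hu t.2 ((hps _).2 ⟨u * r, ?_⟩)
  simp only [Algebra.linearMap_apply, map_mul, Algebra.smul_def] at hut ⊢
  linear_combination hut

end Global

section Conductor

variable {R : Type} [CommRing R]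

theorem mem_conductorIdeal_iff {r : R} :
    r ∈ conductorIdeal R ↔ ∀ x : IntClosure R, ∃ r', algebraMap R (IntClosure R) r' = r • x := by
  simp only [conductorIdeal, Submodule.annihilator_quotient, Submodule.mem_colon, Set.mem_univ,
    true_imp_iff, LinearMap.mem_range, Algebra.linearMap_apply]

theorem exists_mem_conductorIdeal_algebraMap_eq_smul {r : R} (hr : r ∈ conductorIdeal R)
    (x : IntClosure R) : ∃ r' ∈ conductorIdeal R, algebraMap R (IntClosure R) r' = r • x := by
  obtain ⟨r', hr'⟩ := mem_conductorIdeal_iff.1 hr x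
  refine ⟨r', mem_conductorIdeal_iff.2 fun y => ?_, hr'⟩
  rw [Algebra.smul_def, hr', smul_mul_assoc]
  exact mem_conductorIdeal_iff.1 hr (x * y)

variable (R) in
theorem exists_mem_nonZeroDivisors_mem_conductorIdeal [Module.Finite R (IntClosure R)] :
    ∃ a ∈ nonZeroDivisors R, a ∈ conductorIdeal R := by
  classical
  obtain ⟨G, hG⟩ := Module.Finite.fg_top (R := R) (M := IntClosure R)
  obtain ⟨a, ha⟩ := IsLocalization.exist_integer_multiples_of_finset (nonZeroDivisors R)
    (G.image (Subtype.val : IntClosure R → FractionRing R))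
  have hle : ⊤ ≤ (LinearMap.range (Algebra.linearMap R (IntClosure R))).comap
      (LinearMap.lsmul R _ a.1) := by
    rw [← hG, Submodule.span_le]
    intro x hx
    exact (ha x (Finset.mem_image_of_mem _ hx)).imp fun _ hr => Subtype.ext hr
  exact ⟨a, a.2, mem_conductorIdeal_iff.2 fun x => hle (Submodule.mem_top (x := x))⟩

end Conductor

theorem stmt2_general (R : Type) [CommRing R] [IsNoetherianRing R] [IsReduced R]
    [Module.Finite R (IntClosure R)] (hS2 : SerreS2 R)
    (hext : ∃ i : ℕ, 0 < i ∧
      Subsingleton (ExtMod R ↥(conductorIdeal R) ↥(conductorIdeal R) i)) :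
    Module.Free R ↥(conductorIdeal R) ∧ IsNormalRing R := by
  obtain ⟨_ | n, hi, hn⟩ := hext
  · exact absurd hi (lt_irrefl 0)
  obtain ⟨a, ha, hac⟩ := exists_mem_nonZeroDivisors_mem_conductorIdeal R
  have : FaithfulSMul R (IntClosure R) := .tower_bot R (IntClosure R) (FractionRing R)
  have hsurj : Function.Surjective (algebraMap R (IntClosure R)) :=
    surjective_algebraMap_of_serreS2_of_extVanishes (Q := FractionRing R) hS2
      (fun _ => exists_mem_conductorIdeal_algebraMap_eq_smul) hac
      (IsLocalization.map_units (FractionRing R) ⟨a, ha⟩)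
      (subsingleton_abelianExt_succ_of_subsingleton_ext hn)
  have htop : conductorIdeal R = ⊤ :=
    eq_top_iff.2 fun r _ => mem_conductorIdeal_iff.2 fun x => hsurj (r • x)
  refine ⟨?_, ‹IsReduced R›, eq_bot_iff.2 fun x hx => ?_⟩
  · rw [htop]
    exact Module.Free.of_equiv (Submodule.topEquiv (R := R) (M := R)).symm
  · obtain ⟨r, hr⟩ := hsurj ⟨x, hx⟩
    exact Algebra.mem_bot.2 ⟨r, congrArg Subtype.val hr⟩

-- STATEMENT 2
theorem stmt2 (R : Type) [CommRing R] [IsLocalRing R] [IsNoetherianRing R]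
    (hau : AnalyticallyUnramified R) (hS2 : SerreS2 R)
    (hext : ∃ i : ℕ, 0 < i ∧
      Subsingleton (ExtMod R ↥(conductorIdeal R) ↥(conductorIdeal R) i)) :
    Module.Free R ↥(conductorIdeal R) ∧ IsNormalRing R := by
  have : IsReduced (AdicCompletion (maximalIdeal R) R) := hau
  have := isReduced_of_isReduced_adicCompletion R
  have := finite_integralClosure_of_isReduced_adicCompletion R (FractionRing R)
  exact stmt2_general R hS2 hext
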